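/- arXiv:math/0502501 — 5 statements merged into one kernel-verified Lean document; each statement's English description precedes it below -/
import Mathlib

section
/- Let B be a set of mutually orthogonal positive roots of Φ and let β, γ ∈ B. Then there is no node i such that ⟨α_i, β⟩ = 1, ⟨α_i, γ⟩ = −1 and ht(β) = ht(γ) + 1. -/
/-!
If such a node `i` existed, then `β` and `γ` would be distinct, hence orthogonal. Reflecting `β` in
`α i` gives the root `β - α i`, whose inner product with `γ` is `1`, so reflecting once more, in `γ`,
gives the root `β - α i - γ`. Its height is `ht β - 1 - ht γ = 0`, whereas no root has height `0`
(`SLRS.ht_ne_zero`).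
-/

open scoped InnerProductSpace

/-- A finite crystallographic simply laced root system `Φ` in a real inner
product space, normalized so that `⟪β, β⟫ = 2` for all roots, together with a
fixed base `α 1, …, α n` (the nodes of the diagram `M`), the corresponding set
`Pos` of positive roots, and the height linear functional `ht`. -/
structure SLRS (V : Type) [NormedAddCommGroup V] [InnerProductSpace ℝ V] where
  /-- the number of nodes of the diagram -/
  n : ℕ
  /-- the set of roots -/
  Φ : Set V
  /-- the set of positive roots -/
  Pos : Set V
  /-- the simple roots -/
  α : Fin n → V
  /-- the height functional: heights are sums of coefficients on simple roots -/
  ht : V →ₗ[ℝ] ℝ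
  finite : Φ.Finite
  pos_subset : Pos ⊆ Φ
  mem_pos_or_neg : ∀ β ∈ Φ, β ∈ Pos ∨ -β ∈ Pos
  not_pos_and_neg : ∀ β ∈ Pos, -β ∉ Pos
  alpha_pos : ∀ i, α i ∈ Pos
  norm_two : ∀ β ∈ Φ, ⟪β, β⟫_ℝ = 2
  inner_int : ∀ β ∈ Φ, ∀ γ ∈ Φ, ∃ z : ℤ, ⟪β, γ⟫_ℝ = (z : ℝ)
  reflect_mem : ∀ β ∈ Φ, ∀ γ ∈ Φ, β - ⟪β, γ⟫_ℝ • γ ∈ Φ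
  reduced : ∀ β ∈ Φ, ∀ t : ℝ, t • β ∈ Φ → t = 1 ∨ t = -1
  pos_coeff : ∀ β ∈ Pos, ∃ a : Fin n → ℕ, β = ∑ i, (a i : ℝ) • α i
  ht_alpha : ∀ i, ht (α i) = 1

namespace SLRS

variable {V : Type} [NormedAddCommGroup V] [InnerProductSpace ℝ V] (S : SLRS V)

/-- Adjacency of two nodes of the diagram: `i ∼ j` iff `⟪α i, α j⟫ = -1`. -/
def adj (i j : Fin S.n) : Prop := ⟪S.α i, S.α j⟫_ℝ = -1

/-- The reflection along a root `δ` (normalized so that `⟪δ, δ⟫ = 2`). -/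
def reflRoot (δ : V) : V → V := fun v => v - ⟪v, δ⟫_ℝ • δ

/-- The fundamental reflection `r i`. -/
def refl (i : Fin S.n) : V → V := reflRoot (S.α i)

/-- A set of mutually orthogonal positive roots. -/
def IsOrthoSet (B : Set V) : Prop :=
  B ⊆ S.Pos ∧ ∀ β ∈ B, ∀ γ ∈ B, β ≠ γ → ⟪β, γ⟫_ℝ = 0

/-- The action of a map `w` on a set `B` of positive roots:
`w·B = Φ⁺ ∩ {± w β : β ∈ B}`. -/
def mapSet (w : V → V) (B : Set V) : Set V :=
  {x ∈ S.Pos | ∃ β ∈ B, w β = x ∨ w β = -x}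

/-- The action of the fundamental reflection `r i` on a set of positive roots. -/
def rAct (i : Fin S.n) (B : Set V) : Set V := S.mapSet (S.refl i) B

/-- The action of the reflection along a root `δ` on a set of positive roots. -/
def reflAct (δ : V) (B : Set V) : Set V := S.mapSet (reflRoot δ) B

/-- The `W`-orbit of `B`, `W` being generated by the fundamental reflections. -/
def orbitOf (B : Set V) : Set (Set V) :=
  {C | Relation.ReflTransGen (fun X Y => ∃ i, Y = S.rAct i X) B C}

/-- `𝓑` is a `W`-orbit of sets of mutually orthogonal positive roots. -/
def IsOrbit (𝓑 : Set (Set V)) : Prop :=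
  ∃ B, S.IsOrthoSet B ∧ 𝓑 = S.orbitOf B

/-- Admissibility of a `W`-orbit of sets of mutually orthogonal positive roots. -/
def Admissible (𝓑 : Set (Set V)) : Prop :=
  S.IsOrbit 𝓑 ∧ ∀ B ∈ 𝓑, ∀ i j : Fin S.n, i ≠ j → ¬ S.adj i j →
    (∃ γ, γ ∈ B ∧ γ - S.α i + S.α j ∈ B) → S.rAct i B = S.rAct j B

/-- The height order: `B < C` iff `B ≠ C` and the minimal height of an element
of `B \ C` is smaller than the minimal height of an element of `C \ B`. -/
def lt (B C : Set V) : Prop :=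
  B ≠ C ∧ sInf (⇑S.ht '' (B \ C)) < sInf (⇑S.ht '' (C \ B))

/-- The map `V → V` determined by the word `l = [i₁, …, iₛ]`,
namely `r i₁ ∘ r i₂ ∘ ⋯ ∘ r iₛ`. -/
def wordMap (l : List (Fin S.n)) : V → V := l.foldr (fun i f => S.refl i ∘ f) id

/-- A map belongs to the Weyl group `W` iff it is realized by a word in the
fundamental reflections. -/
def InW (w : V → V) : Prop := ∃ l : List (Fin S.n), S.wordMap l = w

/-- The Coxeter length of an element of `W`: the minimal length of a word in
the fundamental reflections representing it. -/
noncomputable def len (w : V → V) : ℕ :=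
  sInf {k | ∃ l : List (Fin S.n), l.length = k ∧ S.wordMap l = w}

/-- The action of `w ∈ W` on a set of positive roots. -/
def wAct (w : V → V) (B : Set V) : Set V := S.mapSet w B

/-- `r i₁ · (r i₂ · ⋯ (r iₛ · B))` for the word `l = [i₁, …, iₛ]`. -/
def suffixAct (l : List (Fin S.n)) (B : Set V) : Set V := l.foldr S.rAct B

/-- The chain `B > r iₛ · B > r iₛ₋₁ r iₛ · B > ⋯ > r i₁ ⋯ r iₛ · B` obtained by
successively applying the letters of the word `l = [i₁, …, iₛ]` to `B` is
strictly descending at every step. -/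
def DescChain (l : List (Fin S.n)) (B : Set V) : Prop :=
  ∀ k < l.length, S.lt (S.suffixAct (l.drop k) B) (S.suffixAct (l.drop (k + 1)) B)

end SLRS

open SLRS

variable {V : Type} [NormedAddCommGroup V] [InnerProductSpace ℝ V]

theorem SLRS.ht_pos (S : SLRS V) {δ : V} (hδ : δ ∈ S.Pos) : 0 < S.ht δ := by
  obtain ⟨a, ha⟩ := S.pos_coeff δ hδ
  have hht : S.ht δ = ∑ i, (a i : ℝ) := by
    rw [ha]
    simp [S.ht_alpha]
  have hnn : ∀ i ∈ Finset.univ, (0 : ℝ) ≤ a i := fun i _ => Nat.cast_nonneg _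
  rw [hht]
  refine lt_of_le_of_ne (Finset.sum_nonneg hnn) fun h => ?_
  -- A vanishing sum of nonnegative coefficients forces `δ = 0`, which has norm `0`.
  have hz := (Finset.sum_eq_zero_iff_of_nonneg hnn).1 h.symm
  have hδ0 : δ = 0 := by
    rw [ha]
    exact Finset.sum_eq_zero fun i hi => by rw [hz i hi, zero_smul]
  have h2 := S.norm_two δ (S.pos_subset hδ)
  rw [hδ0, inner_zero_left] at h2
  norm_num at h2

theorem SLRS.ht_ne_zero (S : SLRS V) {δ : V} (hδ : δ ∈ S.Φ) : S.ht δ ≠ 0 := by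
  rcases S.mem_pos_or_neg δ hδ with h | h
  · exact (S.ht_pos h).ne'
  · have := S.ht_pos h
    rw [map_neg] at this
    linarith

/-- Proposition 2.1(i): for a set `B` of mutually orthogonal
positive roots and `β, γ ∈ B`, there is no node `i` with `⟪α i, β⟫ = 1`,
`⟪α i, γ⟫ = -1` and `ht β = ht γ + 1`. -/
theorem no_node_inner_one_negOne_ht_succ (S : SLRS V) (B : Set V)
    (hB : S.IsOrthoSet B) (β γ : V) (hβ : β ∈ B) (hγ : γ ∈ B) :
    ¬ ∃ i : Fin S.n, ⟪S.α i, β⟫_ℝ = 1 ∧ ⟪S.α i, γ⟫_ℝ = -1 ∧ S.ht β = S.ht γ + 1 := by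
  rintro ⟨i, h1, h2, h3⟩
  have hne : β ≠ γ := by
    rintro rfl
    linarith
  have horth : ⟪β, γ⟫_ℝ = 0 := hB.2 β hβ γ hγ hne
  have hroot1 : β - S.α i ∈ S.Φ := by
    have h := S.reflect_mem β (S.pos_subset (hB.1 hβ)) (S.α i) (S.pos_subset (S.alpha_pos i))
    rwa [real_inner_comm, h1, one_smul] at h
  have hroot2 : β - S.α i - γ ∈ S.Φ := by
    have h := S.reflect_mem _ hroot1 γ (S.pos_subset (hB.1 hγ))
    rwa [inner_sub_left, horth, h2, zero_sub, neg_neg, one_smul] at h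
  apply S.ht_ne_zero hroot2
  rw [map_sub, map_sub, S.ht_alpha, h3]
  ring
end

section
/- Let δ_r ∈ Φ⁺ and let r be the reflection along δ_r. Let β, γ be two mutually orthogonal positive roots with ⟨δ_r, β⟩ ≠ 0 and ⟨δ_r, γ⟩ ≠ 0. Then there exists a root δ ∈ Φ with ⟨δ, δ_r⟩ = 0 such that, writing s for the reflection along δ, one has r(s(γ)) = β or r(s(γ)) = −β. (In particular s commutes with r and the set action satisfies rs·{γ} = {β}.) -/
/-!
Write `ε = ⟪δr, β⟫` and `η = ⟪δr, γ⟫`. Both are `±1`: the roots `β` and `γ` are orthogonal, so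
`δr`, being non-orthogonal to both, is proportional to neither. Reflecting `δr` along `β` and then
along `γ` gives the root `δ = δr - ε β - η γ`, which satisfies `⟪δ, δr⟫ = 2 - ε² - η² = 0` and
`⟪γ, δ⟫ = η - 2 η = -η`. Hence `s γ = γ + η δ = η δr - ε η β`, and applying `r` gives `-(ε η) β`.
-/


open scoped InnerProductSpace

open SLRS

variable {V : Type} [NormedAddCommGroup V] [InnerProductSpace ℝ V]

/-- Two non-orthogonal roots have inner product `±1` unless they are proportional; a vector `c`
orthogonal to one but not to the other excludes proportionality. -/
lemma inner_sq_eq_one (S : SLRS V) {a b c : V} (ha : a ∈ S.Φ) (hb : b ∈ S.Φ)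
    (hab : ⟪a, b⟫_ℝ ≠ 0) (hac : ⟪a, c⟫_ℝ ≠ 0) (hbc : ⟪b, c⟫_ℝ = 0) :
    ⟪a, b⟫_ℝ = 1 ∨ ⟪a, b⟫_ℝ = -1 := by
  obtain ⟨z, hz⟩ := S.inner_int a ha b hb
  have ha2 := S.norm_two a ha
  have hb2 := S.norm_two b hb
  set w : V := (2 : ℝ) • a - (z : ℝ) • b with hw
  have hw0 : w ≠ 0 := by
    intro h
    have h1 : ⟪w, c⟫_ℝ = 0 := by rw [h, inner_zero_left]
    rw [hw, inner_sub_left, real_inner_smul_left, real_inner_smul_left, hbc] at h1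
    exact hac (by linarith)
  have hpos : 0 < ⟪w, w⟫_ℝ := real_inner_self_pos.2 hw0
  have hww : ⟪w, w⟫_ℝ = 8 - 2 * (z : ℝ) ^ 2 := by
    simp only [hw, inner_sub_left, inner_sub_right, real_inner_smul_left, real_inner_smul_right,
      real_inner_comm a b, ha2, hb2, hz]
    ring
  have hlt : z ^ 2 < 4 := by
    have : (z : ℝ) ^ 2 < 4 := by linarith
    exact_mod_cast this
  have hz0 : z ≠ 0 := by
    rintro rfl
    exact hab (by simpa using hz)
  have h1 : z < 2 := by nlinarith
  have h2 : -2 < z := by nlinarith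
  have h3 : z = 1 ∨ z = -1 := by omega
  rw [hz]
  exact_mod_cast h3

/-- Lemma 2.3: if the reflection along `δr ∈ Φ⁺` moves two
mutually orthogonal positive roots `β` and `γ`, then there is a root `δ`
orthogonal to `δr` such that, `s` being the reflection along `δ`,
`r s γ = ± β`. -/
theorem exists_commuting_reflection (S : SLRS V) (δr : V) (hδr : δr ∈ S.Pos)
    (β γ : V) (hβ : β ∈ S.Pos) (hγ : γ ∈ S.Pos) (hbc : ⟪β, γ⟫_ℝ = 0)
    (hrβ : ⟪δr, β⟫_ℝ ≠ 0) (hrγ : ⟪δr, γ⟫_ℝ ≠ 0) :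
    ∃ δ ∈ S.Φ, ⟪δ, δr⟫_ℝ = 0 ∧
      (reflRoot δr (reflRoot δ γ) = β ∨ reflRoot δr (reflRoot δ γ) = -β) := by
  have hd := S.pos_subset hδr
  have hb := S.pos_subset hβ
  have hg := S.pos_subset hγ
  have hcb : ⟪γ, β⟫_ℝ = 0 := by rw [real_inner_comm, hbc]
  have hε := inner_sq_eq_one S hd hb hrβ hrγ hbc
  have hη := inner_sq_eq_one S hd hg hrγ hrβ hcb
  have hd2 := S.norm_two _ hd
  have hg2 := S.norm_two _ hg
  have hεc : ⟪β, δr⟫_ℝ = ⟪δr, β⟫_ℝ := real_inner_comm _ _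
  have hηc : ⟪γ, δr⟫_ℝ = ⟪δr, γ⟫_ℝ := real_inner_comm _ _
  have hmem := S.reflect_mem _ (S.reflect_mem _ hd _ hb) _ hg
  rw [inner_sub_left, real_inner_smul_left, hbc, mul_zero, sub_zero] at hmem
  refine ⟨_, hmem, ?_, ?_⟩
  · simp only [inner_sub_left, real_inner_smul_left, hd2, hεc, hηc]
    rcases hε with h | h <;> rcases hη with h' | h' <;> rw [h, h'] <;> norm_num
  · simp only [reflRoot, inner_sub_left, inner_sub_right, real_inner_smul_left,
      real_inner_smul_right, hd2, hg2, hεc, hηc, hcb]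
    -- the sign is `-(ε η)`
    rcases hε with h | h <;> rcases hη with h' | h' <;> rw [h, h']
    · right; module
    · left; module
    · left; module
    · right; module
end

section
/- Let δ ∈ Φ and let B be a set of mutually orthogonal roots of Φ such that ⟨δ, β⟩ = ±1 for every β ∈ B. Then |B| ≤ 4. (Equivalently: a reflection of W moves at most four mutually orthogonal roots.) -/
/-!
The bound is Bessel's inequality for the orthogonal family `B`. The vector
`w = ∑ β ∈ B, ⟪δ, β⟫ • β` satisfies `⟪δ, w⟫ = |B|` and `⟪w, w⟫ = 2 |B|`, since every
`⟪δ, β⟫` squares to `1` and the roots in `B` are orthogonal of squared length `2`.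
Hence `0 ≤ ‖2 • δ - w‖ ^ 2 = 8 - 4 |B| + 2 |B| = 8 - 2 |B|`.
-/

open scoped InnerProductSpace

open SLRS

variable {V : Type} [NormedAddCommGroup V] [InnerProductSpace ℝ V]

/-- a reflection of `W` moves at most four mutually orthogonal
roots: if `δ ∈ Φ` and `B` is a set of pairwise orthogonal roots with
`⟪δ, β⟫ = ± 1` for all `β ∈ B`, then `|B| ≤ 4`. -/
theorem card_moved_le_four (S : SLRS V) (δ : V) (hδ : δ ∈ S.Φ)
    (B : Set V) (hBΦ : B ⊆ S.Φ)
    (horth : ∀ β ∈ B, ∀ γ ∈ B, β ≠ γ → ⟪β, γ⟫_ℝ = 0)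
    (hmove : ∀ β ∈ B, ⟪δ, β⟫_ℝ = 1 ∨ ⟪δ, β⟫_ℝ = -1) :
    B.ncard ≤ 4 := by
  classical
  lift B to Finset V using S.finite.subset hBΦ
  simp only [Finset.mem_coe] at horth hmove
  rw [Set.ncard_coe_finset]
  set w : V := ∑ β ∈ B, ⟪δ, β⟫_ℝ • β with hw
  have hsq : ∀ β ∈ B, ⟪δ, β⟫_ℝ * ⟪δ, β⟫_ℝ = 1 := by
    intro β hβ
    rcases hmove β hβ with h | h <;> rw [h] <;> norm_num
  have hδw : ⟪δ, w⟫_ℝ = B.card := by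
    simp only [hw, inner_sum, real_inner_smul_right]
    rw [Finset.sum_congr rfl hsq]
    simp
  have hβw : ∀ β ∈ B, ⟪β, w⟫_ℝ = 2 * ⟪δ, β⟫_ℝ := by
    intro β hβ
    simp only [hw, inner_sum, real_inner_smul_right]
    rw [Finset.sum_eq_single_of_mem β hβ
      (fun γ hγ hne => by rw [horth β hβ γ hγ hne.symm, mul_zero]),
      S.norm_two β (hBΦ hβ), mul_comm]
  have hww : ⟪w, w⟫_ℝ = 2 * B.card := by
    conv_lhs => enter [2]; rw [hw]
    simp only [sum_inner, real_inner_smul_left]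
    have hterm : ∀ β ∈ B, ⟪δ, β⟫_ℝ * ⟪β, w⟫_ℝ = 2 := by
      intro β hβ
      rw [hβw β hβ]
      linarith [hsq β hβ]
    rw [Finset.sum_congr rfl hterm]
    simp [mul_comm]
  -- Bessel: `2 • δ - w` is twice the component of `δ` orthogonal to the span of `B`.
  have hnonneg : 0 ≤ ⟪(2 : ℝ) • δ - w, (2 : ℝ) • δ - w⟫_ℝ := real_inner_self_nonneg
  simp only [inner_sub_left, inner_sub_right, real_inner_smul_left, real_inner_smul_right,
    real_inner_comm δ w, hδw, hww, S.norm_two δ hδ] at hnonneg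
  have hcard : (B.card : ℝ) ≤ 4 := by linarith
  exact_mod_cast hcard
end

section
/- Assume Φ is irreducible and let 𝓑 be a W-orbit of sets of mutually orthogonal positive roots. Then the following are equivalent: (a) 𝓑 is admissible; (b) for every pair r, s of distinct commuting reflections of W and every B ∈ 𝓑, if there exists γ ∈ B with rsγ ≠ ±γ such that the positive root among ±rsγ also belongs to B, then r·B = s·B; (c) for every reflection r of W and every B ∈ 𝓑, the cardinality of r·B \ B is 0, 1, 2 or 4. -/
/-!
All three conditions are equivalent to the absence, in every `B ∈ 𝓑`, of an *incomplete `D₄`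
quadruple* (`SLRS.Bad`): a root `δ` and three members `β₁, β₂, β₃` of `B`, with signs chosen so that
`⟪δ, βᵢ⟫ = 1`, whose fourth companion `β₁ + β₂ + β₃ - 2δ` is not in `±B`.

* By Bessel's inequality a root `δ` is neither orthogonal nor proportional to at most four members
  of `B`, and the number of these is `|r·B \ B|`. Exactly three of them form an incomplete
  quadruple, and conversely, which settles (c) (`SLRS.ncard_diff`, `SLRS.ncard_touching_le`,
  `SLRS.exists_bad`, `SLRS.Bad.ncard_eq`).
* If `δ ⟂ ε` and `r s` exchanges two members of `B` up to sign, then it fixes every other member or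
  sends it to the fourth root of a `D₄` quadruple. Hence (b) holds when no quadruple is incomplete
  (`SLRS.reflAct_eq`). Specializing (b) to simple roots gives (a).
* Given an incomplete quadruple, the root `ε = β₁ + β₂ - δ` is orthogonal to `δ`. The plane of `δ`
  and `ε` contains no roots besides `±δ, ±ε`, so this `A₁ × A₁` is a parabolic subsystem: taking a
  linear functional that vanishes on no other root and moving it by `W` into the dominant chamber
  carries `δ` and `ε` to simple roots up to sign (`SLRS.exists_functional`,
  `SLRS.simple_of_dominant`). There admissibility forces the missing root into `B`
  (`SLRS.Bad.false_of_simple`, `SLRS.Admissible.not_bad`).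
-/

open scoped InnerProductSpace

namespace SLRS

variable {V : Type} [NormedAddCommGroup V] [InnerProductSpace ℝ V]

/-! ### Reflections and roots -/

section Reflections

variable {d : V}

lemma reflRoot_add (x y : V) : reflRoot d (x + y) = reflRoot d x + reflRoot d y := by
  simp only [reflRoot, inner_add_left]; module

lemma reflRoot_smul (c : ℝ) (x : V) : reflRoot d (c • x) = c • reflRoot d x := by
  simp only [reflRoot, real_inner_smul_left]; module

lemma reflRoot_neg (x : V) : reflRoot d (-x) = -reflRoot d x := by
  simp only [reflRoot, inner_neg_left]; module

lemma reflRoot_sub (x y : V) : reflRoot d (x - y) = reflRoot d x - reflRoot d y := by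
  simp only [reflRoot, inner_sub_left]; module

lemma reflRoot_invol (hd : ⟪d, d⟫_ℝ = 2) (x : V) : reflRoot d (reflRoot d x) = x := by
  simp only [reflRoot, inner_sub_left, real_inner_smul_left, hd]; module

lemma reflRoot_self (hd : ⟪d, d⟫_ℝ = 2) : reflRoot d d = -d := by
  simp only [reflRoot, hd]; module

lemma reflRoot_inner (hd : ⟪d, d⟫_ℝ = 2) (x y : V) :
    ⟪reflRoot d x, reflRoot d y⟫_ℝ = ⟪x, y⟫_ℝ := by
  simp only [reflRoot, inner_sub_left, inner_sub_right, real_inner_smul_left,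
    real_inner_smul_right, hd, real_inner_comm y d]
  ring

lemma reflRoot_of_inner_eq_zero {x : V} (h : ⟪x, d⟫_ℝ = 0) : reflRoot d x = x := by
  simp [reflRoot, h]

/-- The reflection along a root as a linear map. -/
def reflLin (d : V) : V →ₗ[ℝ] V where
  toFun := reflRoot d
  map_add' := reflRoot_add
  map_smul' := reflRoot_smul

lemma reflRoot_sign_smul {a : ℝ} (ha : a ^ 2 = 1) (x : V) :
    reflRoot (a • d) x = reflRoot d x := by
  simp only [reflRoot, real_inner_smul_right, smul_smul]
  rw [show a * ⟪x, d⟫_ℝ * a = a ^ 2 * ⟪x, d⟫_ℝ by ring, ha, one_mul]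

end Reflections

variable (S : SLRS V)

lemma neg_mem {x : V} (hx : x ∈ S.Φ) : -x ∈ S.Φ := by
  have := S.reflect_mem x hx x hx
  rw [S.norm_two x hx] at this
  convert this using 1
  module

lemma sign_smul_mem {x : V} (hx : x ∈ S.Φ) {a : ℝ} (ha : a ^ 2 = 1) : a • x ∈ S.Φ := by
  rcases (mul_self_eq_one_iff.mp (by rwa [← sq]) : a = 1 ∨ a = -1) with rfl | rfl
  · simpa using hx
  · simpa using S.neg_mem hx

lemma alpha_mem (i : Fin S.n) : S.α i ∈ S.Φ := S.pos_subset (S.alpha_pos i)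

lemma reflRoot_mem {d x : V} (hd : d ∈ S.Φ) (hx : x ∈ S.Φ) : reflRoot d x ∈ S.Φ :=
  S.reflect_mem x hx d hd

/-- The possible positions of two roots, by integrality and Cauchy–Schwarz. -/
lemma inner_cases {x y : V} (hx : x ∈ S.Φ) (hy : y ∈ S.Φ) :
    x = y ∨ x = -y ∨ ⟪x, y⟫_ℝ = 0 ∨ ⟪x, y⟫_ℝ = 1 ∨ ⟪x, y⟫_ℝ = -1 := by
  obtain ⟨z, hz⟩ := S.inner_int x hx y hy
  have hxx := S.norm_two x hx
  have hyy := S.norm_two y hy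
  have e1 : ⟪x - y, x - y⟫_ℝ = 4 - 2 * z := by
    simp only [inner_sub_left, inner_sub_right, real_inner_comm x y, hxx, hyy, hz]; ring
  have e2 : ⟪x + y, x + y⟫_ℝ = 4 + 2 * z := by
    simp only [inner_add_left, inner_add_right, real_inner_comm x y, hxx, hyy, hz]; ring
  have h1 : (z : ℝ) ≤ 2 := by
    have : 0 ≤ ⟪x - y, x - y⟫_ℝ := real_inner_self_nonneg
    linarith
  have h2 : (-2 : ℝ) ≤ z := by
    have : 0 ≤ ⟪x + y, x + y⟫_ℝ := real_inner_self_nonneg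
    linarith
  have h1' : z ≤ 2 := by exact_mod_cast h1
  have h2' : -2 ≤ z := by exact_mod_cast h2
  rw [hz]
  interval_cases z
  · right; left
    have : x + y = 0 := inner_self_eq_zero (𝕜 := ℝ).mp (by rw [e2]; norm_num)
    exact eq_neg_of_add_eq_zero_left this
  · simp
  · simp
  · simp
  · left
    have : x - y = 0 := inner_self_eq_zero (𝕜 := ℝ).mp (by rw [e1]; norm_num)
    exact sub_eq_zero.mp this

lemma ne_zero_of_mem {x : V} (hx : x ∈ S.Φ) : x ≠ 0 := by
  rintro rfl
  have := S.norm_two 0 hx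
  simp at this

/-- Heights of positive roots are at least one. -/
lemma one_le_ht {x : V} (hx : x ∈ S.Pos) : 1 ≤ S.ht x := by
  obtain ⟨a, ha⟩ := S.pos_coeff x hx
  have hht : S.ht x = ((∑ i, a i : ℕ) : ℝ) := by
    rw [ha]; simp [S.ht_alpha]
  rw [hht]
  have : (∑ i, a i) ≠ 0 := by
    intro h0
    have h1 : ∀ i, a i = 0 := by simpa using h0
    exact S.ne_zero_of_mem (S.pos_subset hx) (by rw [ha]; simp [h1])
  exact_mod_cast Nat.one_le_iff_ne_zero.mpr this

/-- A fundamental reflection permutes the positive roots other than its own root. -/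
lemma refl_pos {x : V} (hx : x ∈ S.Pos) {i : Fin S.n} (hne : x ≠ S.α i) :
    S.refl i x ∈ S.Pos := by
  have hxΦ := S.pos_subset hx
  rcases S.mem_pos_or_neg _ (S.reflRoot_mem (S.alpha_mem i) hxΦ) with h | h
  · exact h
  · exfalso
    have h1 := S.one_le_ht h
    have h2 := S.one_le_ht hx
    simp only [reflRoot, map_neg, map_sub, map_smul, S.ht_alpha, smul_eq_mul] at h1
    rcases S.inner_cases hxΦ (S.alpha_mem i) with e | e | e | e | e
    · exact hne e
    · exact S.not_pos_and_neg _ (S.alpha_pos i) (e ▸ hx)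
    all_goals rw [e] at h1; linarith

lemma alpha_inner_eq_zero {i j : Fin S.n} (hne : S.α i ≠ S.α j) (hadj : ¬ S.adj i j) :
    ⟪S.α i, S.α j⟫_ℝ = 0 := by
  rcases S.inner_cases (S.alpha_mem i) (S.alpha_mem j) with e | e | e | e | e
  · exact absurd e hne
  · exact absurd (e ▸ S.alpha_pos i) (S.not_pos_and_neg _ (S.alpha_pos j))
  · exact e
  · -- then the difference of the two simple roots is a root of height zero
    exfalso
    have hm := S.reflect_mem _ (S.alpha_mem i) _ (S.alpha_mem j)
    rw [e, one_smul] at hm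
    rcases S.mem_pos_or_neg _ hm with h | h
    all_goals
      have := S.one_le_ht h
      simp only [map_neg, map_sub, S.ht_alpha] at this
      linarith
  · exact absurd e hadj

/-! ### The action on orthogonal sets -/

/-- The closure `B ∪ -B` of a set of roots under sign change. The action on sets of positive
roots becomes the ordinary image action on these closures. -/
def sg (B : Set V) : Set V := {x | x ∈ B ∨ -x ∈ B}

omit [InnerProductSpace ℝ V] in
lemma neg_mem_sg {B : Set V} {x : V} : -x ∈ sg B ↔ x ∈ sg B := by
  simp only [sg, Set.mem_ofPred_eq, neg_neg]; tauto

lemma sign_smul_mem_sg {B : Set V} {x : V} {a : ℝ} (ha : a ^ 2 = 1) :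
    a • x ∈ sg B ↔ x ∈ sg B := by
  rcases (mul_self_eq_one_iff.mp (by rwa [← sq]) : a = 1 ∨ a = -1) with rfl | rfl
  · simp
  · simpa using neg_mem_sg

variable {S}

lemma IsOrthoSet.sg_subset {B : Set V} (hB : S.IsOrthoSet B) {x : V} (hx : x ∈ sg B) :
    x ∈ S.Φ := by
  rcases hx with h | h
  · exact S.pos_subset (hB.1 h)
  · simpa using S.neg_mem (S.pos_subset (hB.1 h))

lemma IsOrthoSet.inner_sg {B : Set V} (hB : S.IsOrthoSet B) {x y : V} (hx : x ∈ sg B)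
    (hy : y ∈ sg B) : x = y ∨ x = -y ∨ ⟪x, y⟫_ℝ = 0 := by
  rcases hx with hx | hx <;> rcases hy with hy | hy
  · by_cases h : x = y
    · exact Or.inl h
    · exact Or.inr (Or.inr (hB.2 _ hx _ hy h))
  · by_cases h : x = -y
    · exact Or.inr (Or.inl h)
    · exact Or.inr (Or.inr (by simpa using hB.2 _ hx _ hy h))
  · by_cases h : -x = y
    · exact Or.inr (Or.inl (by rw [← h, neg_neg]))
    · exact Or.inr (Or.inr (by simpa using hB.2 _ hx _ hy h))
  · by_cases h : -x = -y
    · exact Or.inl (neg_injective h)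
    · exact Or.inr (Or.inr (by simpa using hB.2 _ hx _ hy h))

lemma IsOrthoSet.mem_of_sg {B : Set V} (hB : S.IsOrthoSet B) {x : V} (hx : x ∈ S.Pos)
    (hs : x ∈ sg B) : x ∈ B := by
  rcases hs with h | h
  · exact h
  · exact absurd (hB.1 h) (S.not_pos_and_neg _ hx)

lemma mem_reflAct {d : V} (hd : d ∈ S.Φ) {B : Set V} {x : V} :
    x ∈ S.reflAct d B ↔ x ∈ S.Pos ∧ reflRoot d x ∈ sg B := by
  have h2 := S.norm_two d hd
  simp only [reflAct, mapSet, Set.mem_ofPred_eq, sg]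
  refine and_congr_right fun _ => ⟨?_, ?_⟩
  · rintro ⟨b, hb, h | h⟩
    · left; rw [← h, reflRoot_invol h2]; exact hb
    · right; rw [← reflRoot_neg, ← h, reflRoot_invol h2]; exact hb
  · rintro (h | h)
    · exact ⟨_, h, Or.inl (reflRoot_invol h2 x)⟩
    · exact ⟨_, h, Or.inr (by rw [reflRoot_neg, reflRoot_invol h2])⟩

lemma mem_sg_reflAct {d : V} (hd : d ∈ S.Φ) {B : Set V} (hB : S.IsOrthoSet B) {x : V} :
    x ∈ sg (S.reflAct d B) ↔ reflRoot d x ∈ sg B := by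
  have h2 := S.norm_two d hd
  constructor
  · rintro (h | h)
    · exact ((mem_reflAct hd).1 h).2
    · have := ((mem_reflAct hd).1 h).2
      rwa [reflRoot_neg, neg_mem_sg] at this
  · intro h
    have hx : x ∈ S.Φ := by
      rw [← reflRoot_invol h2 x]
      exact S.reflRoot_mem hd (hB.sg_subset h)
    rcases S.mem_pos_or_neg x hx with hp | hp
    · exact Or.inl ((mem_reflAct hd).2 ⟨hp, h⟩)
    · exact Or.inr ((mem_reflAct hd).2 ⟨hp, by rwa [reflRoot_neg, neg_mem_sg]⟩)

lemma IsOrthoSet.reflAct {d : V} (hd : d ∈ S.Φ) {B : Set V} (hB : S.IsOrthoSet B) :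
    S.IsOrthoSet (S.reflAct d B) := by
  have h2 := S.norm_two d hd
  refine ⟨fun x hx => hx.1, fun x hx y hy hne => ?_⟩
  have hx' := (mem_reflAct hd).1 hx
  have hy' := (mem_reflAct hd).1 hy
  rcases hB.inner_sg hx'.2 hy'.2 with h | h | h
  · exact absurd (by rw [← reflRoot_invol h2 x, h, reflRoot_invol h2]) hne
  · have : x = -y := by rw [← reflRoot_invol h2 x, h, reflRoot_neg, reflRoot_invol h2]
    exact absurd (this ▸ hx'.1) (S.not_pos_and_neg _ hy'.1)
  · rwa [reflRoot_inner h2] at h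

lemma IsOrbit.ortho {𝓑 : Set (Set V)} (h : S.IsOrbit 𝓑) {B : Set V} (hB : B ∈ 𝓑) :
    S.IsOrthoSet B := by
  obtain ⟨B₀, h₀, rfl⟩ := h
  refine Relation.ReflTransGen.rec (motive := fun C _ => S.IsOrthoSet C) h₀ ?_ hB
  rintro C D - ⟨i, rfl⟩ hC
  exact hC.reflAct (S.alpha_mem i)

lemma IsOrbit.rAct_mem {𝓑 : Set (Set V)} (h : S.IsOrbit 𝓑) {B : Set V} (hB : B ∈ 𝓑)
    (i : Fin S.n) : S.rAct i B ∈ 𝓑 := by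
  obtain ⟨B₀, h₀, rfl⟩ := h
  exact Relation.ReflTransGen.tail hB ⟨i, rfl⟩

/-! ### Incomplete `D₄` quadruples -/

/-- Three members of `B`, up to sign, from a quadruple of mutually orthogonal roots in the
`D₄` subsystem they span with `δ`, whose fourth member `β₁ + β₂ + β₃ - 2δ` is missing from `B`.
The root `ε = β₁ + β₂ - δ` is orthogonal to `δ`. -/
structure Bad (S : SLRS V) (B : Set V) (δ ε β₁ β₂ β₃ : V) : Prop where
  hδ : δ ∈ S.Φ
  h1 : β₁ ∈ sg B
  h2 : β₂ ∈ sg B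
  h3 : β₃ ∈ sg B
  sum : β₁ + β₂ = δ + ε
  d1 : ⟪δ, β₁⟫_ℝ = 1
  d2 : ⟪δ, β₂⟫_ℝ = 1
  d3 : ⟪δ, β₃⟫_ℝ = 1
  o12 : ⟪β₁, β₂⟫_ℝ = 0
  o13 : ⟪β₁, β₃⟫_ℝ = 0
  o23 : ⟪β₂, β₃⟫_ℝ = 0
  missing : β₁ + β₂ + β₃ - (2 : ℝ) • δ ∉ sg B

namespace Bad

variable {B : Set V} {δ ε β₁ β₂ β₃ : V}

lemma neg (h : Bad S B δ ε β₁ β₂ β₃) : Bad S B (-δ) (-ε) (-β₁) (-β₂) (-β₃) where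
  hδ := S.neg_mem h.hδ
  h1 := neg_mem_sg.2 h.h1
  h2 := neg_mem_sg.2 h.h2
  h3 := neg_mem_sg.2 h.h3
  sum := by linear_combination (norm := module) (-1 : ℝ) • h.sum
  d1 := by simpa using h.d1
  d2 := by simpa using h.d2
  d3 := by simpa using h.d3
  o12 := by simpa using h.o12
  o13 := by simpa using h.o13
  o23 := by simpa using h.o23
  missing := by
    have := h.missing
    rw [← neg_mem_sg] at this
    convert this using 2
    module

lemma rAct (h : Bad S B δ ε β₁ β₂ β₃) (hB : S.IsOrthoSet B) (i : Fin S.n) :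
    Bad S (S.rAct i B) (S.refl i δ) (S.refl i ε) (S.refl i β₁) (S.refl i β₂) (S.refl i β₃) := by
  have hα := S.alpha_mem i
  have h2 := S.norm_two _ hα
  have key : ∀ x, S.refl i x ∈ sg (S.rAct i B) ↔ x ∈ sg B := fun x => by
    refine (mem_sg_reflAct hα hB).trans ?_
    rw [refl, reflRoot_invol h2]
  have ki : ∀ x y, ⟪S.refl i x, S.refl i y⟫_ℝ = ⟪x, y⟫_ℝ := reflRoot_inner h2
  refine ⟨S.reflRoot_mem hα h.hδ, (key _).2 h.h1, (key _).2 h.h2, (key _).2 h.h3, ?_,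
    (ki _ _).trans h.d1, (ki _ _).trans h.d2, (ki _ _).trans h.d3, (ki _ _).trans h.o12,
    (ki _ _).trans h.o13, (ki _ _).trans h.o23, ?_⟩
  · rw [refl, ← reflRoot_add, h.sum, reflRoot_add]
  · rw [refl, ← reflRoot_smul, ← reflRoot_add, ← reflRoot_add, ← reflRoot_sub]
    exact fun hm => h.missing ((key _).1 hm)

lemma eps_eq (h : Bad S B δ ε β₁ β₂ β₃) : ε = β₁ + β₂ - δ := by
  rw [h.sum]; abel

lemma eps_mem (h : Bad S B δ ε β₁ β₂ β₃) (hB : S.IsOrthoSet B) : ε ∈ S.Φ := by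
  have m := S.neg_mem (S.reflRoot_mem (hB.sg_subset h.h2)
    (S.reflRoot_mem (hB.sg_subset h.h1) h.hδ))
  convert m using 1
  simp only [h.eps_eq, reflRoot, inner_sub_left, real_inner_smul_left, h.d1, h.d2, h.o12]
  module

lemma orth (h : Bad S B δ ε β₁ β₂ β₃) : ⟪δ, ε⟫_ℝ = 0 := by
  rw [h.eps_eq, inner_sub_right, inner_add_right, h.d1, h.d2, S.norm_two δ h.hδ]
  norm_num

lemma e3 (h : Bad S B δ ε β₁ β₂ β₃) : ⟪ε, β₃⟫_ℝ = -1 := by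
  rw [h.eps_eq, inner_sub_left, inner_add_left, h.o13, h.o23, h.d3]
  norm_num

/-- If `δ` and `-ε` are simple roots, admissibility at that pair of nodes
forces the missing fourth root into `B`. -/
lemma false_of_simple {𝓑 : Set (Set V)} (ha : S.Admissible 𝓑) (hmem : B ∈ 𝓑) {i j : Fin S.n}
    (h : Bad S B δ ε β₁ β₂ β₃) (hi : δ = S.α i) (hj : ε = -S.α j) : False := by
  have hB := ha.1.ortho hmem
  have horth := h.orth
  have h3 := h.e3
  have hsum := h.sum
  have hd3 := h.d3
  have hmiss := h.missing
  rw [hsum] at hmiss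
  subst hi hj
  simp only [inner_neg_left, inner_neg_right] at horth h3
  have hij : i ≠ j := by
    rintro rfl
    linarith [S.norm_two _ (S.alpha_mem i)]
  have hadj : ¬ S.adj i j := by
    intro e
    simp only [adj] at e
    linarith
  have hht : S.ht β₁ + S.ht β₂ = 0 := by
    rw [← map_add, hsum, map_add, map_neg, S.ht_alpha, S.ht_alpha]; ring
  have hγ : ∃ γ, γ ∈ B ∧ γ - S.α i + S.α j ∈ B := by
    rcases h.h1 with m1 | m1 <;> rcases h.h2 with m2 | m2
    · have := S.one_le_ht (hB.1 m1)
      have := S.one_le_ht (hB.1 m2)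
      linarith
    · refine ⟨β₁, m1, ?_⟩
      convert m2 using 1
      linear_combination (norm := module) (1 : ℝ) • hsum
    · refine ⟨β₂, m2, ?_⟩
      convert m1 using 1
      linear_combination (norm := module) (1 : ℝ) • hsum
    · have := S.one_le_ht (hB.1 m1)
      have := S.one_le_ht (hB.1 m2)
      simp only [map_neg] at *
      linarith
  have heq := ha.2 B hmem i j hij hadj hγ
  have m : reflRoot (S.α i) β₃ ∈ sg (S.reflAct (S.α i) B) :=
    (mem_sg_reflAct (S.alpha_mem i) hB).2
      (by rw [reflRoot_invol (S.norm_two _ (S.alpha_mem i))]; exact h.h3)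
  rw [show S.reflAct (S.α i) B = S.reflAct (S.α j) B from heq,
    mem_sg_reflAct (S.alpha_mem j) hB] at m
  apply hmiss
  convert m using 1
  simp only [reflRoot, inner_sub_left, real_inner_smul_left, real_inner_comm _ β₃]
  rw [hd3, show ⟪S.α j, β₃⟫_ℝ = 1 by linarith, show ⟪S.α i, S.α j⟫_ℝ = 0 by linarith]
  module

end Bad


/-! ### Moving two orthogonal roots to simple roots -/

/-- The plane spanned by two orthogonal roots contains no further roots up to sign, so a generic
linear functional among those vanishing on it vanishes on no other root. -/
lemma exists_functional {δ ε : V} (hδ : δ ∈ S.Φ) (hε : ε ∈ S.Φ) (ho : ⟪δ, ε⟫_ℝ = 0) :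
    ∃ g : V →ₗ[ℝ] ℝ, g δ = 0 ∧ g ε = 0 ∧
      ∀ x ∈ S.Φ, g x = 0 → x = δ ∨ x = -δ ∨ x = ε ∨ x = -ε := by
  have hd := S.norm_two δ hδ
  have he := S.norm_two ε hε
  -- twice the orthogonal projection away from `δ` and `ε`
  let p : V →ₗ[ℝ] V :=
    { toFun := fun x => (2 : ℝ) • x - ⟪x, δ⟫_ℝ • δ - ⟪x, ε⟫_ℝ • ε
      map_add' := fun x y => by simp only [inner_add_left]; module
      map_smul' := fun c x => by
        simp only [real_inner_smul_left, RingHom.id_apply]; module }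
  have hp : ∀ x, p x = (2 : ℝ) • x - ⟪x, δ⟫_ℝ • δ - ⟪x, ε⟫_ℝ • ε := fun _ => rfl
  let R : Set V := {x | x ∈ S.Φ ∧ ¬ (x = δ ∨ x = -δ ∨ x = ε ∨ x = -ε)}
  have hR : R.Finite := S.finite.subset fun x hx => hx.1
  have : Finite R := hR
  have hne : ∀ x : R, p x ≠ 0 := by
    rintro ⟨x, hx, hn⟩ h0
    simp only [hp] at h0
    have hsq : ⟪(2 : ℝ) • x - ⟪x, δ⟫_ℝ • δ - ⟪x, ε⟫_ℝ • ε, x⟫_ℝ = 0 := by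
      rw [h0, inner_zero_left]
    simp only [inner_sub_left, real_inner_smul_left, S.norm_two x hx] at hsq
    rw [real_inner_comm x δ, real_inner_comm x ε] at hsq
    rcases S.inner_cases hx hδ with e | e | e | e | e <;>
    rcases S.inner_cases hx hε with e' | e' | e' | e' | e'
    all_goals first
      | tauto
      | (rw [e, e'] at hsq; norm_num at hsq)
  obtain ⟨f, hf⟩ := Module.exists_dual_forall_apply_ne_zero (K := ℝ) (fun x : R => p x) hne
  refine ⟨f ∘ₗ p, ?_, ?_, fun x hx h0 => ?_⟩
  · rw [LinearMap.comp_apply, hp, hd, ho, zero_smul, sub_zero, sub_self, map_zero]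
  · rw [LinearMap.comp_apply, hp, he, real_inner_comm, ho, zero_smul, sub_zero, sub_self,
      map_zero]
  · by_contra hn
    exact hf ⟨x, hx, hn⟩ h0

/-- A root on which a dominant functional `g` vanishes is simple up to sign, provided the other
zeros of `g` among the roots are, up to sign, a single root orthogonal to it. -/
lemma simple_of_dominant {g : V →ₗ[ℝ] ℝ} (hg : ∀ i, 0 ≤ g (S.α i)) {δ ε : V} (hδ : δ ∈ S.Φ)
    (ho : ⟪δ, ε⟫_ℝ = 0) (hδ0 : g δ = 0)
    (hz : ∀ x ∈ S.Φ, g x = 0 → x = δ ∨ x = -δ ∨ x = ε ∨ x = -ε) :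
    ∃ i, δ = S.α i ∨ δ = -S.α i := by
  wlog hp : δ ∈ S.Pos generalizing δ
  · have hn := (S.mem_pos_or_neg δ hδ).resolve_left hp
    obtain ⟨i, h⟩ := this (S.neg_mem hδ) (by simpa using ho) (by simpa using hδ0)
      (fun x hx h0 => by rw [neg_neg]; have := hz x hx h0; tauto) hn
    refine ⟨i, ?_⟩
    rcases h with h | h
    · exact Or.inr (by rw [← h, neg_neg])
    · exact Or.inl (neg_injective h)
  · obtain ⟨a, ha⟩ := S.pos_coeff δ hp
    have hsum : ∑ i, (a i : ℝ) * g (S.α i) = 0 := by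
      rw [← hδ0]
      conv_rhs => rw [ha]
      simp
    have hterm := (Finset.sum_eq_zero_iff_of_nonneg
      (fun i _ => mul_nonneg (Nat.cast_nonneg (a i)) (hg i))).1 hsum
    have hinner : ∑ i, (a i : ℝ) * ⟪S.α i, δ⟫_ℝ ≠ 0 := by
      have h2 := S.norm_two δ hδ
      have : ⟪∑ i, (a i : ℝ) • S.α i, δ⟫_ℝ = 2 := by rw [← ha, h2]
      simp only [sum_inner, real_inner_smul_left] at this
      rw [this]; norm_num
    obtain ⟨i, -, hi⟩ := Finset.exists_ne_zero_of_sum_ne_zero hinner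
    have hai : (a i : ℝ) ≠ 0 := left_ne_zero_of_mul hi
    have hin : ⟪S.α i, δ⟫_ℝ ≠ 0 := right_ne_zero_of_mul hi
    have h0 : g (S.α i) = 0 := (mul_eq_zero.1 (hterm i (Finset.mem_univ i))).resolve_left hai
    refine ⟨i, ?_⟩
    rcases hz _ (S.alpha_mem i) h0 with e | e | e | e
    · exact Or.inl e.symm
    · exact Or.inr (by rw [e, neg_neg])
    · exact absurd (by rw [e, real_inner_comm, ho]) hin
    · exact absurd (by rw [e, inner_neg_left, real_inner_comm, ho, neg_zero]) hin

/-- The positive roots on which a functional is negative. -/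
def negSet (S : SLRS V) (g : V →ₗ[ℝ] ℝ) : Set V := {x ∈ S.Pos | g x < 0}

/-- Reflecting a functional that is negative on a simple root makes it negative on fewer
positive roots. -/
lemma negSet_lt {g : V →ₗ[ℝ] ℝ} {i : Fin S.n} (hi : g (S.α i) < 0) :
    (negSet S (g ∘ₗ reflLin (S.α i))).ncard < (negSet S g).ncard := by
  have h2 := S.norm_two _ (S.alpha_mem i)
  have hinj : Function.Injective (S.refl i) := Function.Involutive.injective (reflRoot_invol h2)
  have hfin : (negSet S g).Finite := S.finite.subset fun x hx => S.pos_subset hx.1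
  rw [← Set.ncard_image_of_injective (f := S.refl i) _ hinj]
  apply Set.ncard_lt_ncard _ hfin
  refine ⟨?_, fun hsub => ?_⟩
  · rintro _ ⟨x, ⟨hx, hgx⟩, rfl⟩
    refine ⟨S.refl_pos hx ?_, hgx⟩
    rintro rfl
    have : g (reflRoot (S.α i) (S.α i)) < 0 := hgx
    rw [reflRoot_self h2, map_neg] at this
    linarith
  · obtain ⟨x, ⟨hx, -⟩, he⟩ := hsub (show S.α i ∈ negSet S g from ⟨S.alpha_pos i, hi⟩)
    have : x = -S.α i := by
      rw [← reflRoot_self h2, ← congrArg (reflRoot (S.α i)) he, refl, reflRoot_invol h2]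
    exact S.not_pos_and_neg _ (S.alpha_pos i) (this ▸ hx)

/-- Members of an admissible orbit have no incomplete `D₄` quadruples: take a functional vanishing
on exactly `±δ, ±ε` among the roots; the Weyl group moves it to a dominant functional,
and hence the pair `δ, ε` to a pair of simple roots up to sign. -/
lemma Admissible.not_bad {𝓑 : Set (Set V)} (ha : S.Admissible 𝓑) {B : Set V} (hmem : B ∈ 𝓑)
    {δ ε β₁ β₂ β₃ : V} (h : Bad S B δ ε β₁ β₂ β₃) : False := by
  obtain ⟨g, hgδ, hgε, hz⟩ := exists_functional h.hδ (h.eps_mem (ha.1.ortho hmem)) h.orth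
  induction hN : (negSet S g).ncard using Nat.strong_induction_on
    generalizing g B δ ε β₁ β₂ β₃ with
  | _ N ih =>
  have hB := ha.1.ortho hmem
  by_cases hdom : ∀ i, 0 ≤ g (S.α i)
  · obtain ⟨i, hi⟩ := simple_of_dominant hdom h.hδ h.orth hgδ hz
    obtain ⟨j, hj⟩ := simple_of_dominant hdom (h.eps_mem hB) (by rw [real_inner_comm]; exact h.orth)
      hgε (fun x hx h0 => by have := hz x hx h0; tauto)
    have hflip := h.rAct hB i
    have hmem' := ha.1.rAct_mem hmem i
    have h2 := S.norm_two _ (S.alpha_mem i)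
    have horth := h.orth
    -- if the signs of `δ` and `ε` agree, applying `r i` changes the sign of `δ` only
    rcases hi with hi | hi <;> rcases hj with hj | hj
    · rw [hi, hj] at horth hflip
      rw [real_inner_comm] at horth
      refine Bad.false_of_simple ha hmem' hflip.neg (i := i) (j := j) ?_ ?_
      · rw [refl, reflRoot_self h2, neg_neg]
      · rw [refl, reflRoot_of_inner_eq_zero horth]
    · exact h.false_of_simple ha hmem hi hj
    · exact h.neg.false_of_simple ha hmem (by rw [hi, neg_neg]) (by rw [hj])
    · rw [hi, hj] at horth hflip
      rw [real_inner_comm] at horth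
      refine Bad.false_of_simple ha hmem' hflip (i := i) (j := j) ?_ ?_
      · rw [refl, reflRoot_neg, reflRoot_self h2, neg_neg]
      · rw [refl, reflRoot_of_inner_eq_zero (by simpa using horth)]
  · push Not at hdom
    obtain ⟨i, hi⟩ := hdom
    have h2 := S.norm_two _ (S.alpha_mem i)
    have hgr : ∀ x, (g ∘ₗ reflLin (S.α i)) (S.refl i x) = g x := fun x =>
      congrArg g (reflRoot_invol h2 x)
    refine ih _ (hN ▸ negSet_lt hi) (ha.1.rAct_mem hmem i) (h.rAct hB i)
      (g ∘ₗ reflLin (S.α i)) ((hgr _).trans hgδ) ((hgr _).trans hgε) ?_ rfl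
    intro x hx h0
    have hback : ∀ y, S.refl i x = y → x = S.refl i y := fun y hy => by
      rw [← hy]; exact (reflRoot_invol h2 x).symm
    have hneg : ∀ y, S.refl i (-y) = -S.refl i y := reflRoot_neg
    rcases hz (S.refl i x) (S.reflRoot_mem (S.alpha_mem i) hx) h0 with e | e | e | e
    · exact Or.inl (hback _ e)
    · exact Or.inr (Or.inl ((hback _ e).trans (hneg _)))
    · exact Or.inr (Or.inr (Or.inl (hback _ e)))
    · exact Or.inr (Or.inr (Or.inr ((hback _ e).trans (hneg _))))

/-! ### Counting the roots moved by a reflection -/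

/-- The members of `B` that are neither orthogonal nor proportional to `δ`. -/
def touching (B : Set V) (δ : V) : Set V := {x ∈ B | ⟪δ, x⟫_ℝ = 1 ∨ ⟪δ, x⟫_ℝ = -1}

lemma inner_sq {δ x : V} (h : ⟪δ, x⟫_ℝ = 1 ∨ ⟪δ, x⟫_ℝ = -1) : ⟪δ, x⟫_ℝ ^ 2 = 1 := by
  rcases h with h | h <;> rw [h] <;> norm_num

/-- The reflection along `δ` moves a member of `B` out of `B` exactly when it is touched by `δ`. -/
lemma ncard_diff {B : Set V} (hB : S.IsOrthoSet B) {δ : V} (hδ : δ ∈ S.Φ) :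
    (S.reflAct δ B \ B).ncard = (touching B δ).ncard := by
  classical
  have h2 := S.norm_two δ hδ
  have hΦ : ∀ x ∈ B, x ∈ S.Φ := fun x hx => S.pos_subset (hB.1 hx)
  let f : V → V := fun x => if reflRoot δ x ∈ S.Pos then reflRoot δ x else -reflRoot δ x
  have hf : ∀ x, f x = reflRoot δ x ∨ f x = -reflRoot δ x := fun x => by
    by_cases h : reflRoot δ x ∈ S.Pos <;> simp [f, h]
  have hfpos : ∀ x ∈ S.Φ, f x ∈ S.Pos := fun x hx => by
    by_cases h : reflRoot δ x ∈ S.Pos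
    · simp [f, h]
    · simpa [f, h] using (S.mem_pos_or_neg _ (S.reflRoot_mem hδ hx)).resolve_left h
  have hrf : ∀ x, reflRoot δ (f x) = x ∨ reflRoot δ (f x) = -x := fun x => by
    rcases hf x with h | h <;> rw [h]
    · exact Or.inl (reflRoot_invol h2 x)
    · exact Or.inr (by rw [reflRoot_neg, reflRoot_invol h2])
  have himg : S.reflAct δ B \ B = f '' touching B δ := by
    ext y
    constructor
    · rintro ⟨⟨hy, x, hx, h⟩, hyB⟩
      have hfx : f x = y := by
        rcases h with h | h
        · simp [f, h, hy]
        · simp [f, h, S.not_pos_and_neg y hy]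
      refine ⟨x, ⟨hx, ?_⟩, hfx⟩
      rcases S.inner_cases hδ (hΦ x hx) with e | e | e | e | e
      · subst e
        rw [reflRoot_self h2] at h
        rcases h with h | h
        · exact absurd hy (h ▸ S.not_pos_and_neg _ (hB.1 hx))
        · exact absurd (neg_injective h ▸ hx) hyB
      · subst e
        have hs : reflRoot (-x) x = -x := by
          have := reflRoot_sign_smul (d := x) (a := -1) (by norm_num) x
          rw [neg_one_smul] at this
          rw [this, reflRoot_self (S.norm_two x (hΦ x hx))]
        rw [hs] at h
        rcases h with h | h
        · exact absurd hy (h ▸ S.not_pos_and_neg _ (hB.1 hx))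
        · exact absurd (neg_injective h ▸ hx) hyB
      · rw [reflRoot_of_inner_eq_zero (by rw [real_inner_comm]; exact e)] at h
        rcases h with h | h
        · exact absurd (h ▸ hx) hyB
        · exact absurd (h ▸ hB.1 hx) (S.not_pos_and_neg _ hy)
      · exact Or.inl e
      · exact Or.inr e
    · rintro ⟨x, ⟨hx, he⟩, rfl⟩
      have hxx := S.norm_two x (hΦ x hx)
      refine ⟨(mem_reflAct hδ).2 ⟨hfpos x (hΦ x hx), ?_⟩, fun hm => ?_⟩
      · rcases hrf x with h | h <;> rw [h]
        · exact Or.inl hx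
        · exact neg_mem_sg.2 (Or.inl hx)
      · -- the image of `x` has inner product `±1` with `x`
        have hsq := inner_sq he
        have hin : ⟪reflRoot δ x, x⟫_ℝ = 1 := by
          simp only [reflRoot, inner_sub_left, real_inner_smul_left, hxx, real_inner_comm δ x]
          linarith
        have hfx : ⟪f x, x⟫_ℝ = 1 ∨ ⟪f x, x⟫_ℝ = -1 := by
          rcases hf x with h | h <;> rw [h]
          · exact Or.inl hin
          · exact Or.inr (by rw [inner_neg_left, hin])
        by_cases hxe : f x = x
        · rw [hxe, hxx] at hfx
          norm_num at hfx
        · have := hB.2 _ hm _ hx hxe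
          rw [this] at hfx
          norm_num at hfx
  rw [himg]
  apply Set.InjOn.ncard_image
  intro x hx y hy hxy
  have hx' := hrf x
  have hy' := hrf y
  rw [hxy] at hx'
  have hp := hB.1 hx.1
  have hq := hB.1 hy.1
  rcases hx' with e | e <;> rcases hy' with e' | e' <;> rw [e] at e'
  · exact e'
  · exact absurd (e' ▸ hp) (S.not_pos_and_neg _ hq)
  · exact absurd (e' ▸ hq) (S.not_pos_and_neg _ hp)
  · exact neg_injective e'

lemma IsOrthoSet.finite {B : Set V} (hB : S.IsOrthoSet B) : B.Finite :=
  S.finite.subset fun _ hx => S.pos_subset (hB.1 hx)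

/-- Bessel's inequality: a root touches at most four mutually orthogonal roots. -/
lemma ncard_touching_le {B : Set V} (hB : S.IsOrthoSet B) {δ : V} (hδ : δ ∈ S.Φ) :
    (touching B δ).ncard ≤ 4 := by
  classical
  have hfin : (touching B δ).Finite := hB.finite.subset fun x hx => hx.1
  have hΦ : ∀ x ∈ B, x ∈ S.Φ := fun x hx => S.pos_subset (hB.1 hx)
  rw [Set.ncard_eq_toFinset_card _ hfin]
  set s := hfin.toFinset with hs
  have hmem : ∀ x ∈ s, x ∈ touching B δ := fun x hx => by simpa [hs] using hx
  set v : V := ∑ x ∈ s, ⟪δ, x⟫_ℝ • x with hv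
  have e1 : ⟪δ, v⟫_ℝ = s.card := by
    rw [hv, inner_sum, Finset.card_eq_sum_ones, Nat.cast_sum]
    refine Finset.sum_congr rfl fun x hx => ?_
    rw [real_inner_smul_right, ← sq, inner_sq (hmem x hx).2, Nat.cast_one]
  have e2 : ⟪v, v⟫_ℝ = 2 * s.card := by
    conv_lhs => rw [hv, sum_inner]
    rw [Finset.card_eq_sum_ones, Nat.cast_sum, Finset.mul_sum]
    refine Finset.sum_congr rfl fun x hx => ?_
    rw [real_inner_smul_left, inner_sum, Finset.sum_eq_single x]
    · rw [real_inner_smul_right, S.norm_two x (hΦ x (hmem x hx).1)]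
      have := inner_sq (hmem x hx).2
      push_cast
      linear_combination 2 * this
    · intro y hy hne
      rw [real_inner_smul_right, hB.2 x (hmem x hx).1 y (hmem y hy).1 hne.symm, mul_zero]
    · exact fun h => absurd hx h
  have hpos : 0 ≤ ⟪(2 : ℝ) • δ - v, (2 : ℝ) • δ - v⟫_ℝ := real_inner_self_nonneg
  simp only [inner_sub_left, inner_sub_right, real_inner_smul_left, real_inner_smul_right,
    S.norm_two δ hδ, e2, real_inner_comm δ v, e1] at hpos
  have : (s.card : ℝ) ≤ 4 := by linarith
  exact_mod_cast this


/-- A root touching exactly three members of `B` gives an incomplete `D₄` quadruple. -/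
lemma exists_bad {B : Set V} (hB : S.IsOrthoSet B) {δ : V} (hδ : δ ∈ S.Φ)
    (h3 : (touching B δ).ncard = 3) : ∃ ε β₁ β₂ β₃, Bad S B δ ε β₁ β₂ β₃ := by
  obtain ⟨x, y, z, hxy, hxz, hyz, hT⟩ := Set.ncard_eq_three.1 h3
  have hx : x ∈ touching B δ := by rw [hT]; simp
  have hy : y ∈ touching B δ := by rw [hT]; simp
  have hz : z ∈ touching B δ := by rw [hT]; simp
  have hxy0 := hB.2 x hx.1 y hy.1 hxy
  have hxz0 := hB.2 x hx.1 z hz.1 hxz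
  have hyz0 := hB.2 y hy.1 z hz.1 hyz
  have sx := inner_sq hx.2
  have sy := inner_sq hy.2
  have sz := inner_sq hz.2
  have hd := S.norm_two δ hδ
  have hx2 := S.norm_two x (S.pos_subset (hB.1 hx.1))
  have hy2 := S.norm_two y (S.pos_subset (hB.1 hy.1))
  have hz2 := S.norm_two z (S.pos_subset (hB.1 hz.1))
  refine ⟨⟪δ, x⟫_ℝ • x + ⟪δ, y⟫_ℝ • y - δ, ⟪δ, x⟫_ℝ • x, ⟪δ, y⟫_ℝ • y, ⟪δ, z⟫_ℝ • z, hδ,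
    (sign_smul_mem_sg sx).2 (Or.inl hx.1), (sign_smul_mem_sg sy).2 (Or.inl hy.1),
    (sign_smul_mem_sg sz).2 (Or.inl hz.1), by abel, ?_, ?_, ?_, ?_, ?_, ?_, ?_⟩
  · rw [real_inner_smul_right, ← sq, sx]
  · rw [real_inner_smul_right, ← sq, sy]
  · rw [real_inner_smul_right, ← sq, sz]
  · simp [real_inner_smul_left, real_inner_smul_right, hxy0]
  · simp [real_inner_smul_left, real_inner_smul_right, hxz0]
  · simp [real_inner_smul_left, real_inner_smul_right, hyz0]
  · -- a fourth member would be touched by `δ`, but it is orthogonal to `x`, `y` and `z`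
    intro hm
    set w := ⟪δ, x⟫_ℝ • x + ⟪δ, y⟫_ℝ • y + ⟪δ, z⟫_ℝ • z - (2 : ℝ) • δ with hw
    have wδ : ⟪δ, w⟫_ℝ = -1 := by
      simp only [hw, inner_add_right, inner_sub_right, real_inner_smul_right, hd]
      linear_combination sx + sy + sz
    have wx : ⟪w, x⟫_ℝ = 0 := by
      simp only [hw, inner_add_left, inner_sub_left, real_inner_smul_left, hx2,
        real_inner_comm x y, real_inner_comm x z, hxy0, hxz0]
      ring
    have wy : ⟪w, y⟫_ℝ = 0 := by
      simp only [hw, inner_add_left, inner_sub_left, real_inner_smul_left, hy2,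
        real_inner_comm y z, hxy0, hyz0]
      ring
    have wz : ⟪w, z⟫_ℝ = 0 := by
      simp only [hw, inner_add_left, inner_sub_left, real_inner_smul_left, hz2, hxz0, hyz0]
      ring
    have key : ∀ u, u = w ∨ u = -w → u ∈ B → False := by
      intro u hu huB
      have hut : u ∈ touching B δ := by
        refine ⟨huB, ?_⟩
        rcases hu with rfl | rfl
        · exact Or.inr wδ
        · exact Or.inl (by rw [inner_neg_right, wδ, neg_neg])
      have u2 := S.norm_two u (S.pos_subset (hB.1 huB))
      have hzero : ∀ v, ⟪w, v⟫_ℝ = 0 → u ≠ v := by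
        rintro v hv rfl
        rcases hu with e | e
        · rw [← e, u2] at hv; norm_num at hv
        · rw [show w = -u by rw [e, neg_neg], inner_neg_left, u2] at hv; norm_num at hv
      rw [hT] at hut
      rcases hut with e | e | e
      · exact hzero x wx e
      · exact hzero y wy e
      · exact hzero z wz e
    rcases hm with hm | hm
    · exact key _ (Or.inl rfl) hm
    · exact key _ (Or.inr rfl) hm

/-- In an incomplete `D₄` quadruple the root `δ` touches exactly three members of `B`: a fourth
would turn Bessel's inequality into an equality and hence complete the quadruple. -/
lemma Bad.ncard_eq {B : Set V} (hB : S.IsOrthoSet B) {δ ε β₁ β₂ β₃ : V}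
    (h : Bad S B δ ε β₁ β₂ β₃) : (touching B δ).ncard = 3 := by
  have hd := S.norm_two δ h.hδ
  -- the representative in `B` of a signed member
  have rep : ∀ β ∈ sg B, ⟪δ, β⟫_ℝ = 1 → ∃ x ∈ touching B δ, x = β ∨ x = -β := by
    intro β hβ h1
    rcases hβ with hm | hm
    · exact ⟨β, ⟨hm, Or.inl h1⟩, Or.inl rfl⟩
    · exact ⟨-β, ⟨hm, Or.inr (by rw [inner_neg_right, h1])⟩, Or.inr rfl⟩
  obtain ⟨x, hx, ex⟩ := rep β₁ h.h1 h.d1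
  obtain ⟨y, hy, ey⟩ := rep β₂ h.h2 h.d2
  obtain ⟨z, hz, ez⟩ := rep β₃ h.h3 h.d3
  have n1 := S.norm_two _ (hB.sg_subset h.h1)
  have n2 := S.norm_two _ (hB.sg_subset h.h2)
  have n3 := S.norm_two _ (hB.sg_subset h.h3)
  have hne : ∀ u v β β' : V, u = β ∨ u = -β → v = β' ∨ v = -β' → ⟪β, β⟫_ℝ = 2 →
      ⟪β, β'⟫_ℝ = 0 → u ≠ v := by
    rintro u v β β' hu hv hβ h0 rfl
    have : ⟪u, u⟫_ℝ = 0 := by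
      nth_rewrite 1 [← neg_neg u]
      rcases hu with e | e <;> rcases hv with e' | e' <;>
      · nth_rewrite 1 [e]
        rw [e']
        simp [h0]
    have h2 : ⟪u, u⟫_ℝ = 2 := by
      rcases hu with rfl | rfl
      · exact hβ
      · simpa using hβ
    linarith
  refine Set.ncard_eq_three.2 ⟨x, y, z, hne _ _ _ _ ex ey n1 h.o12, hne _ _ _ _ ex ez n1 h.o13,
    hne _ _ _ _ ey ez n2 h.o23, ?_⟩
  apply Set.Subset.antisymm
  · intro u hu
    by_contra hn
    simp only [Set.mem_insert_iff, Set.mem_singleton_iff, not_or] at hn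
    obtain ⟨hux, huy, huz⟩ := hn
    have ho : ∀ v β : V, v ∈ touching B δ → v = β ∨ v = -β → u ≠ v → ⟪β, u⟫_ℝ = 0 := by
      intro v β hv hvβ huv
      have := hB.2 v hv.1 u hu.1 huv.symm
      rcases hvβ with rfl | rfl
      · exact this
      · simpa using this
    have o1 := ho x β₁ hx ex hux
    have o2 := ho y β₂ hy ey huy
    have o3 := ho z β₃ hz ez huz
    have su := inner_sq hu.2
    have u2 := S.norm_two u (S.pos_subset (hB.1 hu.1))
    have hzero : (2 : ℝ) • δ - β₁ - β₂ - β₃ - ⟪δ, u⟫_ℝ • u = 0 := by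
      apply inner_self_eq_zero (𝕜 := ℝ).mp
      simp only [inner_sub_left, inner_sub_right, real_inner_smul_left, real_inner_smul_right,
        real_inner_comm δ, real_inner_comm β₁ β₂, real_inner_comm β₁ β₃, real_inner_comm β₂ β₃,
        real_inner_comm β₁ u, real_inner_comm β₂ u, real_inner_comm β₃ u,
        hd, n1, n2, n3, u2, h.d1, h.d2, h.d3, h.o12, h.o13, h.o23, o1, o2, o3]
      linear_combination -2 * su
    apply h.missing
    have e : β₁ + β₂ + β₃ - (2 : ℝ) • δ = -(⟪δ, u⟫_ℝ • u) := by
      linear_combination (norm := module) (-1 : ℝ) • hzero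
    rw [e, neg_mem_sg, sign_smul_mem_sg su]
    exact Or.inl hu.1
  · rintro u (rfl | rfl | rfl)
    exacts [hx, hy, hz]

/-! ### Commuting reflections -/

/-- Reflections along roots commute only if they coincide or the roots are orthogonal. -/
lemma inner_eq_zero_of_commute {δ ε : V} (hδ : ⟪δ, δ⟫_ℝ = 2) (hε : ⟪ε, ε⟫_ℝ = 2)
    (hne : reflRoot δ ≠ (reflRoot ε : V → V))
    (hc : reflRoot δ ∘ reflRoot ε = reflRoot ε ∘ (reflRoot δ : V → V)) : ⟪δ, ε⟫_ℝ = 0 := by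
  by_contra hp
  have h := congrFun hc δ
  simp only [Function.comp_apply, reflRoot_self hδ] at h
  simp only [reflRoot, inner_sub_left, inner_neg_left, real_inner_smul_left, hδ,
    real_inner_comm δ ε] at h
  have h1 : ⟪δ, ε⟫_ℝ • (⟪δ, ε⟫_ℝ • δ) = ⟪δ, ε⟫_ℝ • ((2 : ℝ) • ε) := by
    linear_combination (norm := module) (1 : ℝ) • h
  have h2 := smul_right_injective V hp h1
  have h3 : ⟪⟪δ, ε⟫_ℝ • δ, ε⟫_ℝ = ⟪(2 : ℝ) • ε, ε⟫_ℝ := congrArg (fun v => ⟪v, ε⟫_ℝ) h2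
  rw [real_inner_smul_left, real_inner_smul_left, hε] at h3
  set p := ⟪δ, ε⟫_ℝ
  apply hne
  have e : ε = (p / 2) • δ := by
    linear_combination (norm := module) (-(1 / 2) : ℝ) • h2
  funext v
  rw [e, reflRoot_sign_smul (by linear_combination h3 / 4)]

/-- If an orthogonal set `B` has no incomplete `D₄` quadruple, orthogonal reflections whose product
exchanges two of its members act on it in the same way. -/
lemma reflAct_eq {B : Set V} (hB : S.IsOrthoSet B)
    (hnb : ∀ δ ε β₁ β₂ β₃ : V, ¬ Bad S B δ ε β₁ β₂ β₃) {δ ε : V} (hδ : δ ∈ S.Φ) (hε : ε ∈ S.Φ)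
    (ho : ⟪δ, ε⟫_ℝ = 0) {γ : V} (hγ : γ ∈ B) (h1 : reflRoot δ (reflRoot ε γ) ≠ γ)
    (h2 : reflRoot δ (reflRoot ε γ) ≠ -γ) (hm : reflRoot δ (reflRoot ε γ) ∈ sg B) :
    S.reflAct δ B = S.reflAct ε B := by
  have hγΦ := S.pos_subset (hB.1 hγ)
  have hd := S.norm_two δ hδ
  have he := S.norm_two ε hε
  have hg := S.norm_two γ hγΦ
  have ho' : ⟪ε, δ⟫_ℝ = 0 := by rw [real_inner_comm]; exact ho
  have hcomp : ∀ x, reflRoot δ (reflRoot ε x) = x - ⟪x, δ⟫_ℝ • δ - ⟪x, ε⟫_ℝ • ε := fun x => by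
    simp only [reflRoot, inner_sub_left, real_inner_smul_left, ho']
    module
  have hcomp' : ∀ x, reflRoot ε (reflRoot δ x) = reflRoot δ (reflRoot ε x) := fun x => by
    rw [hcomp]
    simp only [reflRoot, inner_sub_left, real_inner_smul_left, ho]
    module
  have horth : ⟪reflRoot δ (reflRoot ε γ), γ⟫_ℝ = 0 := by
    rcases hB.inner_sg hm (Or.inl hγ) with e | e | e
    · exact absurd e h1
    · exact absurd e h2
    · exact e
  rw [hcomp] at horth hm
  simp only [inner_sub_left, real_inner_smul_left, hg] at horth
  rw [real_inner_comm γ δ, real_inner_comm γ ε] at horth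
  obtain ⟨a, ha⟩ : ∃ a, a = ⟪γ, δ⟫_ℝ := ⟨_, rfl⟩
  obtain ⟨b, hb⟩ : ∃ b, b = ⟪γ, ε⟫_ℝ := ⟨_, rfl⟩
  rw [← ha, ← hb] at horth hm
  have hab : a ^ 2 = 1 ∧ b ^ 2 = 1 := by
    rcases S.inner_cases hγΦ hδ with e | e | e | e | e
    · rw [e, hd] at ha; rw [ha] at horth; nlinarith [sq_nonneg b]
    · rw [e, inner_neg_left, hd] at ha; rw [ha] at horth; nlinarith [sq_nonneg b]
    · rcases S.inner_cases hγΦ hε with e' | e' | e' | e' | e'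
      · rw [e', he] at hb; rw [hb] at horth; nlinarith [sq_nonneg a]
      · rw [e', inner_neg_left, he] at hb; rw [hb] at horth; nlinarith [sq_nonneg a]
      all_goals
        rw [ha, hb, e, e'] at horth
        norm_num at horth
    all_goals
      rw [← ha] at e
      subst e
      constructor <;> linarith
  obtain ⟨ha2, hb2⟩ := hab
  -- choose the signs of the roots so that `γ` has inner product `1` with both
  have hβ₂ : a • δ + b • ε - γ ∈ sg B := by
    rw [← neg_mem_sg]
    convert hm using 1
    module
  have hδ' : a • δ ∈ S.Φ := S.sign_smul_mem hδ ha2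
  have hε' : b • ε ∈ S.Φ := S.sign_smul_mem hε hb2
  have d1 : ⟪a • δ, γ⟫_ℝ = 1 := by
    rw [real_inner_smul_left, real_inner_comm, ← ha, ← sq, ha2]
  have e1 : ⟪b • ε, γ⟫_ℝ = 1 := by
    rw [real_inner_smul_left, real_inner_comm, ← hb, ← sq, hb2]
  have hcompab : ∀ x, reflRoot δ (reflRoot ε x) =
      x - ⟪a • δ, x⟫_ℝ • a • δ - ⟪b • ε, x⟫_ℝ • b • ε := fun x => by
    have hs : ∀ (c : ℝ) (v : V), c ^ 2 = 1 → ⟪c • v, x⟫_ℝ • c • v = ⟪x, v⟫_ℝ • v := by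
      intro c v hc
      rw [real_inner_smul_left, smul_smul, real_inner_comm,
        show c * ⟪x, v⟫_ℝ * c = c ^ 2 * ⟪x, v⟫_ℝ by ring, hc, one_mul]
    rw [hcomp, hs a δ ha2, hs b ε hb2]
  have hab0 : ⟪a • δ, b • ε⟫_ℝ = 0 := by
    rw [real_inner_smul_left, real_inner_smul_right, ho]; ring
  have hab0' : ⟪b • ε, a • δ⟫_ℝ = 0 := by rw [real_inner_comm]; exact hab0
  have nd := S.norm_two _ hδ'
  have ne := S.norm_two _ hε'
  generalize a • δ = D at *
  generalize b • ε = E at *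
  have o12 : ⟪γ, D + E - γ⟫_ℝ = 0 := by
    rw [inner_sub_right, inner_add_right, real_inner_comm D γ, real_inner_comm E γ, d1, e1, hg]
    norm_num
  have hγs : γ ∈ sg B := Or.inl hγ
  have hinv : ∀ x ∈ sg B, reflRoot δ (reflRoot ε x) ∈ sg B := by
    intro x hx
    rw [hcompab]
    have dβ : ⟪D, D + E - γ⟫_ℝ = 1 := by
      rw [inner_sub_right, inner_add_right, nd, hab0, d1]; norm_num
    have eβ : ⟪E, D + E - γ⟫_ℝ = 1 := by
      rw [inner_sub_right, inner_add_right, ne, hab0', e1]; norm_num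
    rcases hB.inner_sg (Or.inl hγ) hx with e | e | o1
    · subst e
      rw [d1, e1, ← neg_mem_sg]
      convert hβ₂ using 1
      module
    · rw [show x = -γ by rw [e, neg_neg], inner_neg_right, inner_neg_right, d1, e1]
      convert hβ₂ using 1
      module
    rcases hB.inner_sg hβ₂ hx with e | e | o2
    · rw [← e, dβ, eβ, ← neg_mem_sg]
      convert hγs using 1
      module
    · rw [show x = -(D + E - γ) by rw [e, neg_neg], inner_neg_right, inner_neg_right, dβ, eβ]
      convert hγs using 1
      module
    -- `x` is orthogonal to the two exchanged members, hence to `D + E`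
    have hsum : ⟪E, x⟫_ℝ = -⟪D, x⟫_ℝ := by
      rw [inner_sub_left, inner_add_left, o1] at o2
      linarith
    -- otherwise a nonzero inner product makes the image the fourth root of a quadruple
    have hmain : ⟪D, x⟫_ℝ ^ 2 = 1 →
        x - ⟪D, x⟫_ℝ • D - ⟪E, x⟫_ℝ • E ∈ sg B := by
      intro hs
      by_contra hno
      refine hnb D E γ (D + E - γ) (⟪D, x⟫_ℝ • x)
        ⟨hδ', Or.inl hγ, hβ₂, (sign_smul_mem_sg hs).2 hx, by abel, d1, dβ, ?_, o12, ?_, ?_, ?_⟩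
      · rw [real_inner_smul_right, ← sq, hs]
      · rw [real_inner_smul_right, o1, mul_zero]
      · rw [real_inner_smul_right, o2, mul_zero]
      · intro hin
        apply hno
        rw [← sign_smul_mem_sg hs]
        convert hin using 1
        rw [hsum, smul_sub, smul_sub, smul_smul, smul_smul, mul_neg, ← sq, hs]
        module
    have hxΦ := hB.sg_subset hx
    rcases S.inner_cases hδ' hxΦ with e | e | e | e | e
    · rw [← e, hab0', nd] at hsum
      norm_num at hsum
    · rw [show x = -D by rw [e, neg_neg], inner_neg_right, inner_neg_right, hab0', nd] at hsum
      norm_num at hsum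
    · rw [hsum, e]
      simpa using hx
    · exact hmain (by rw [e]; norm_num)
    · exact hmain (by rw [e]; norm_num)
  ext x
  rw [mem_reflAct hδ, mem_reflAct hε]
  refine and_congr_right fun _ => ⟨fun h => ?_, fun h => ?_⟩
  · have := hinv _ h
    rwa [← hcomp', reflRoot_invol hd] at this
  · have := hinv _ h
    rwa [reflRoot_invol he] at this

/-- Reflecting along a member of an orthogonal set does not change the set. -/
lemma reflAct_of_mem {B : Set V} (hB : S.IsOrthoSet B) {δ : V} (hδ : δ ∈ B) :
    S.reflAct δ B = B := by
  have hδΦ := S.pos_subset (hB.1 hδ)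
  have hd := S.norm_two δ hδΦ
  ext x
  rw [mem_reflAct hδΦ]
  have hfix : ∀ y ∈ sg B, reflRoot δ y = y ∨ reflRoot δ y = -y := by
    intro y hy
    rcases hB.inner_sg hy (Or.inl hδ) with rfl | rfl | e
    · exact Or.inr (reflRoot_self hd)
    · exact Or.inr (by rw [reflRoot_neg, reflRoot_self hd])
    · exact Or.inl (reflRoot_of_inner_eq_zero e)
  constructor
  · rintro ⟨hx, h⟩
    apply hB.mem_of_sg hx
    have := hfix _ h
    rw [reflRoot_invol hd] at this
    rcases this with e | e
    · rwa [← e] at h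
    · rw [e]; exact neg_mem_sg.2 h
  · intro hx
    refine ⟨hB.1 hx, ?_⟩
    rcases hfix x (Or.inl hx) with e | e <;> rw [e]
    · exact Or.inl hx
    · exact neg_mem_sg.2 (Or.inl hx)

end SLRS

open SLRS

variable {V : Type} [NormedAddCommGroup V] [InnerProductSpace ℝ V]

/-- Proposition 2.4, (i) ⟺ (ii) ⟺ (iii): for `Φ` irreducible
and a `W`-orbit `𝓑` of sets of mutually orthogonal positive roots, the
following are equivalent: (a) `𝓑` is admissible; (b) for every pair of distinct
commuting reflections `r`, `s` of `W` and every `B ∈ 𝓑`, if some `γ ∈ B` with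
`r s γ ≠ ± γ` has the positive root among `± r s γ` in `B`, then `r·B = s·B`;
(c) for every reflection `r` of `W` and every `B ∈ 𝓑`, `|r·B \ B| ∈ {0,1,2,4}`. -/
theorem admissible_tfae (S : SLRS V)
    (hirr : ∀ i j : Fin S.n, Relation.ReflTransGen S.adj i j)
    (𝓑 : Set (Set V)) (horb : S.IsOrbit 𝓑) :
    (S.Admissible 𝓑 ↔
      ∀ δ ∈ S.Φ, ∀ ε ∈ S.Φ, reflRoot δ ≠ (reflRoot ε : V → V) →
        reflRoot δ ∘ reflRoot ε = reflRoot ε ∘ (reflRoot δ : V → V) →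
        ∀ B ∈ 𝓑,
          (∃ γ ∈ B, reflRoot δ (reflRoot ε γ) ≠ γ ∧ reflRoot δ (reflRoot ε γ) ≠ -γ ∧
            (reflRoot δ (reflRoot ε γ) ∈ B ∨ -(reflRoot δ (reflRoot ε γ)) ∈ B)) →
          S.reflAct δ B = S.reflAct ε B) ∧
    (S.Admissible 𝓑 ↔
      ∀ δ ∈ S.Φ, ∀ B ∈ 𝓑,
        (S.reflAct δ B \ B).ncard = 0 ∨ (S.reflAct δ B \ B).ncard = 1 ∨
        (S.reflAct δ B \ B).ncard = 2 ∨ (S.reflAct δ B \ B).ncard = 4) := by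
  have hort : ∀ B ∈ 𝓑, S.IsOrthoSet B := fun B hB => horb.ortho hB
  -- every condition is equivalent to the absence of incomplete `D₄` quadruples
  have hab : S.Admissible 𝓑 → ∀ B ∈ 𝓑, ∀ δ ε β₁ β₂ β₃ : V, ¬ Bad S B δ ε β₁ β₂ β₃ :=
    fun ha B hB _ _ _ _ _ h => ha.not_bad hB h
  have hnb : (∀ B ∈ 𝓑, ∀ δ ε β₁ β₂ β₃ : V, ¬ Bad S B δ ε β₁ β₂ β₃) →
      ∀ δ ∈ S.Φ, ∀ ε ∈ S.Φ, reflRoot δ ≠ (reflRoot ε : V → V) →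
        reflRoot δ ∘ reflRoot ε = reflRoot ε ∘ (reflRoot δ : V → V) →
        ∀ B ∈ 𝓑,
          (∃ γ ∈ B, reflRoot δ (reflRoot ε γ) ≠ γ ∧ reflRoot δ (reflRoot ε γ) ≠ -γ ∧
            (reflRoot δ (reflRoot ε γ) ∈ B ∨ -(reflRoot δ (reflRoot ε γ)) ∈ B)) →
          S.reflAct δ B = S.reflAct ε B := by
    rintro h δ hδ ε hε hne hc B hB ⟨γ, hγ, h1, h2, hm⟩
    exact reflAct_eq (hort B hB) (h B hB) hδ hε
      (inner_eq_zero_of_commute (S.norm_two δ hδ) (S.norm_two ε hε) hne hc) hγ h1 h2 hm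
  have hba : (∀ δ ∈ S.Φ, ∀ ε ∈ S.Φ, reflRoot δ ≠ (reflRoot ε : V → V) →
        reflRoot δ ∘ reflRoot ε = reflRoot ε ∘ (reflRoot δ : V → V) →
        ∀ B ∈ 𝓑,
          (∃ γ ∈ B, reflRoot δ (reflRoot ε γ) ≠ γ ∧ reflRoot δ (reflRoot ε γ) ≠ -γ ∧
            (reflRoot δ (reflRoot ε γ) ∈ B ∨ -(reflRoot δ (reflRoot ε γ)) ∈ B)) →
          S.reflAct δ B = S.reflAct ε B) → S.Admissible 𝓑 := by
    refine fun hb => ⟨horb, ?_⟩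
    rintro B hB i j - hadj ⟨γ, hγ, hγ'⟩
    have hBo := hort B hB
    -- the structure does not force distinct nodes to carry distinct simple roots
    by_cases hαα : S.α i = S.α j
    · simp only [rAct, SLRS.refl, hαα]
    have h0 := S.alpha_inner_eq_zero hαα hadj
    have h0' : ⟪S.α j, S.α i⟫_ℝ = 0 := by rw [real_inner_comm]; exact h0
    have hi := S.alpha_mem i
    have hj := S.alpha_mem j
    have hi2 := S.norm_two _ hi
    have hj2 := S.norm_two _ hj
    have hγΦ := S.pos_subset (hBo.1 hγ)
    have hg := S.norm_two γ hγΦ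
    have hne : γ ≠ γ - S.α i + S.α j := by
      intro e
      apply hαα
      linear_combination (norm := module) (1 : ℝ) • e
    have ho := hBo.2 _ hγ _ hγ' hne
    rw [inner_add_right, inner_sub_right, hg] at ho
    by_cases hγi : γ = S.α i
    · -- both simple roots belong to `B`, so both reflections fix `B`
      have hjB : S.α j ∈ B := by
        rw [hγi] at hγ'
        convert hγ' using 1
        abel
      exact (reflAct_of_mem hBo (hγi ▸ hγ)).trans (reflAct_of_mem hBo hjB).symm
    have hin : ⟪γ, S.α i⟫_ℝ = 1 ∧ ⟪γ, S.α j⟫_ℝ = -1 := by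
      have hj3 : ⟪γ, S.α j⟫_ℝ = 0 ∨ ⟪γ, S.α j⟫_ℝ = 1 ∨ ⟪γ, S.α j⟫_ℝ = -1 ∨
          ⟪γ, S.α j⟫_ℝ = 2 := by
        rcases S.inner_cases hγΦ hj with e | e | e | e | e
        · right; right; right; rw [e, hj2]
        · exact absurd (e ▸ hBo.1 hγ) (S.not_pos_and_neg _ (S.alpha_pos j))
        · exact Or.inl e
        · exact Or.inr (Or.inl e)
        · exact Or.inr (Or.inr (Or.inl e))
      rcases S.inner_cases hγΦ hi with e | e | e | e | e
      · exact absurd e hγi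
      · exact absurd (e ▸ hBo.1 hγ) (S.not_pos_and_neg _ (S.alpha_pos i))
      all_goals
        rw [e] at ho ⊢
        rcases hj3 with e' | e' | e' | e' <;> rw [e'] at ho ⊢ <;>
          first
          | (exfalso; norm_num at ho; done)
          | norm_num
    have hcomp : reflRoot (S.α i) (reflRoot (S.α j) γ) = γ - S.α i + S.α j := by
      simp only [reflRoot, inner_sub_left, real_inner_smul_left, h0', hin.1, hin.2]
      module
    refine hb _ hi _ hj ?_ ?_ B hB ⟨γ, hγ, ?_, ?_, ?_⟩
    · intro e
      have h1 := congrFun e (S.α i)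
      rw [reflRoot_self hi2, reflRoot_of_inner_eq_zero h0] at h1
      exact S.not_pos_and_neg _ (S.alpha_pos i) (h1.symm ▸ S.alpha_pos i)
    · funext v
      simp only [Function.comp_apply, reflRoot, inner_sub_left, real_inner_smul_left, h0, h0']
      module
    · rw [hcomp]; exact hne.symm
    · rw [hcomp]
      intro e
      exact S.not_pos_and_neg _ (hBo.1 hγ) (e ▸ hBo.1 hγ')
    · rw [hcomp]; exact Or.inl hγ'
  refine ⟨⟨fun ha => hnb (hab ha), hba⟩, ⟨fun ha δ hδ B hB => ?_, fun hc => ?_⟩⟩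
  · have hBo := hort B hB
    rw [ncard_diff hBo hδ]
    have hle := ncard_touching_le hBo hδ
    have h3 : (touching B δ).ncard ≠ 3 := fun h3 => by
      obtain ⟨ε, β₁, β₂, β₃, h⟩ := exists_bad hBo hδ h3
      exact hab ha B hB _ _ _ _ _ h
    lia
  · refine hba (hnb fun B hB δ ε β₁ β₂ β₃ h => ?_)
    have := hc δ h.hδ B hB
    rw [ncard_diff (hort B hB) h.hδ, h.ncard_eq (hort B hB)] at this
    norm_num at this
end

section
/- Let 𝓑 be an admissible W-orbit of sets of mutually orthogonal positive roots, B ∈ 𝓑 and i a node. Then B and r_i·B are comparable under <, i.e. r_i·B = B or B < r_i·B or r_i·B < B. Moreover, if ⟨α_i, β⟩ = ±1 for some β ∈ B, then r_i·B ≠ B. -/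
/-!
Write `α` for the simple root `α i` and `r` for its reflection. A root `β ∈ B` is *moved* if
`⟪β, α⟫ = ± 1`; every other `β ∈ B` satisfies `r β = ± β`. For a moved `β` the image `r β = β ∓ α`
is a positive root of height `ht β ∓ 1` and `⟪β, r β⟫ = 1`. As distinct elements of `B` are
orthogonal, `r β ∉ B` and `β ∉ r · B`. Hence `B \ r · B` is the set of moved roots and
`r · B \ B` is the set of their images, which already gives the second claim.

For comparability let `h` be the least height of a moved root. If some moved root `β` of height `h`
has `⟪β, α⟫ = 1`, then `r · B \ B` has an element of height `h - 1`. Otherwise some moved root `β`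
of height `h` has `⟪β, α⟫ = -1`, and then every element of `r · B \ B` has height `> h`: the only
obstruction is a moved root `γ` of height `h + 1` with `⟪γ, α⟫ = 1`, and for such a `γ` one has
`⟪β + α, γ⟫ = 1`, so `β + α - γ` would be a root of height `0`.
-/

open scoped InnerProductSpace

open SLRS

variable {V : Type} [NormedAddCommGroup V] [InnerProductSpace ℝ V]

namespace SLRS

/-! ### Heights of roots -/

/-- The height of a positive root is a positive integer. -/
lemma ht_pos_s6 (S : SLRS V) {β : V} (hβ : β ∈ S.Pos) : ∃ m : ℕ, 1 ≤ m ∧ S.ht β = m := by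
  obtain ⟨a, ha⟩ := S.pos_coeff β hβ
  have h : S.ht β = ((∑ i, a i : ℕ) : ℝ) := by
    conv_lhs => rw [ha]
    simp [S.ht_alpha]
  refine ⟨_, ?_, h⟩
  by_contra hlt
  have h0 : ∑ i, a i = 0 := by omega
  have hβ0 : β = 0 := by
    rw [ha]
    refine Finset.sum_eq_zero fun i hi => ?_
    rw [(Finset.sum_eq_zero_iff.1 h0) i hi]
    simp
  have := S.norm_two β (S.pos_subset hβ)
  rw [hβ0] at this
  simp at this

lemma ht_ge (S : SLRS V) {β : V} (hβ : β ∈ S.Pos) : 1 ≤ S.ht β := by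
  obtain ⟨m, hm, h⟩ := S.ht_pos_s6 hβ
  rw [h]
  exact_mod_cast hm

lemma ht_root_ne_zero (S : SLRS V) {β : V} (hβ : β ∈ S.Φ) : S.ht β ≠ 0 := by
  rcases S.mem_pos_or_neg β hβ with h | h
  · linarith [S.ht_ge h]
  · have := S.ht_ge h
    rw [map_neg] at this
    linarith

lemma pos_of_ht_nonneg (S : SLRS V) {β : V} (hβ : β ∈ S.Φ) (h : 0 ≤ S.ht β) : β ∈ S.Pos := by
  refine (S.mem_pos_or_neg β hβ).resolve_right fun h' => ?_
  have := S.ht_ge h'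
  rw [map_neg] at this
  linarith

/-! ### Simple reflections -/

lemma ht_refl (S : SLRS V) (i : Fin S.n) (β : V) :
    S.ht (S.refl i β) = S.ht β - ⟪β, S.α i⟫_ℝ := by
  simp [refl, reflRoot, S.ht_alpha]

lemma inner_alpha_self (S : SLRS V) (i : Fin S.n) : ⟪S.α i, S.α i⟫_ℝ = 2 :=
  S.norm_two _ (S.pos_subset (S.alpha_pos i))

lemma inner_refl_refl (S : SLRS V) (i : Fin S.n) (β γ : V) :
    ⟪S.refl i β, S.refl i γ⟫_ℝ = ⟪β, γ⟫_ℝ := by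
  simp only [refl, reflRoot, inner_sub_left, inner_sub_right, inner_smul_left, inner_smul_right,
    S.inner_alpha_self, real_inner_comm γ (S.α i)]
  simp
  ring

lemma refl_refl (S : SLRS V) (i : Fin S.n) (β : V) : S.refl i (S.refl i β) = β := by
  simp only [refl, reflRoot, inner_sub_left, inner_smul_left, S.inner_alpha_self]
  simp only [conj_trivial]
  module

lemma refl_neg (S : SLRS V) (i : Fin S.n) (β : V) : S.refl i (-β) = -S.refl i β := by
  simp only [refl, reflRoot, inner_neg_left]
  module

/-- A positive root having inner product `± 1` with a simple root stays positive under the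
corresponding reflection. -/
lemma refl_pos_s6 (S : SLRS V) (i : Fin S.n) {β : V} (hβ : β ∈ S.Pos)
    (h : ⟪β, S.α i⟫_ℝ = 1 ∨ ⟪β, S.α i⟫_ℝ = -1) : S.refl i β ∈ S.Pos := by
  refine S.pos_of_ht_nonneg
    (S.reflect_mem β (S.pos_subset hβ) _ (S.pos_subset (S.alpha_pos i))) ?_
  rw [ht_refl]
  have := S.ht_ge hβ
  rcases h with h | h <;> rw [h] <;> linarith

/-- A positive root whose inner product with `α i` is not `± 1` is orthogonal to `α i` or equal
to it. -/
lemma refl_of_not_moved (S : SLRS V) (i : Fin S.n) {β : V} (hβ : β ∈ S.Pos)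
    (h : ¬ (⟪β, S.α i⟫_ℝ = 1 ∨ ⟪β, S.α i⟫_ℝ = -1)) : S.refl i β = β ∨ S.refl i β = -β := by
  obtain ⟨z, hz⟩ := S.inner_int β (S.pos_subset hβ) _ (S.pos_subset (S.alpha_pos i))
  have hn := S.norm_two β (S.pos_subset hβ)
  have ha := S.inner_alpha_self i
  have e1 : ⟪β - S.α i, β - S.α i⟫_ℝ = 4 - 2 * z := by
    rw [real_inner_sub_sub_self, hn, ha, hz]; ring
  have e2 : ⟪β + S.α i, β + S.α i⟫_ℝ = 4 + 2 * z := by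
    rw [real_inner_add_add_self, hn, ha, hz]; ring
  have h1 : (0 : ℝ) ≤ 4 - 2 * z := e1 ▸ real_inner_self_nonneg
  have h2 : (0 : ℝ) ≤ 4 + 2 * z := e2 ▸ real_inner_self_nonneg
  have h1' : (0 : ℤ) ≤ 4 - 2 * z := by exact_mod_cast h1
  have h2' : (0 : ℤ) ≤ 4 + 2 * z := by exact_mod_cast h2
  have hz1 : z ≠ 1 := fun e => h (Or.inl (by simp [hz, e]))
  have hz2 : z ≠ -1 := fun e => h (Or.inr (by simp [hz, e]))
  have hcases : z = 0 ∨ z = 2 ∨ z = -2 := by omega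
  rcases hcases with rfl | rfl | rfl
  · left
    simp [refl, reflRoot, hz]
  · right
    have : β - S.α i = 0 := inner_self_eq_zero.1 (e1.trans (by norm_num))
    simp only [refl, reflRoot, sub_eq_zero.1 this, ha]
    module
  · exfalso
    have : β + S.α i = 0 := inner_self_eq_zero.1 (e2.trans (by norm_num))
    refine S.not_pos_and_neg _ (S.alpha_pos i) ?_
    rwa [← eq_neg_of_add_eq_zero_left this]

/-! ### The action on orthogonal sets -/

lemma isOrthoSet_rAct (S : SLRS V) (i : Fin S.n) {B : Set V} (hB : S.IsOrthoSet B) :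
    S.IsOrthoSet (S.rAct i B) := by
  refine ⟨fun x hx => hx.1, ?_⟩
  rintro x ⟨hx, β, hβ, hxβ⟩ y ⟨hy, γ, hγ, hyγ⟩ hxy
  have hβγ : β ≠ γ := by
    rintro rfl
    rcases hxβ with h | h <;> rcases hyγ with h' | h'
    · exact hxy (h.symm.trans h')
    · exact S.not_pos_and_neg y hy (h'.symm.trans h ▸ hx)
    · exact S.not_pos_and_neg x hx (h.symm.trans h' ▸ hy)
    · exact hxy (neg_injective (h.symm.trans h'))
  have h0 := hB.2 β hβ γ hγ hβγ
  rw [← S.inner_refl_refl i] at h0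
  rcases hxβ with h | h <;> rcases hyγ with h' | h' <;> rw [h, h'] at h0 <;> simpa using h0

lemma isOrthoSet_of_mem (S : SLRS V) {𝓑 : Set (Set V)} (h : S.IsOrbit 𝓑) {B : Set V}
    (hB : B ∈ 𝓑) : S.IsOrthoSet B := by
  obtain ⟨B₀, h₀, rfl⟩ := h
  have hB' : Relation.ReflTransGen (fun X Y => ∃ i, Y = S.rAct i X) B₀ B := hB
  induction hB' with
  | refl => exact h₀
  | tail hs ht ih =>
    obtain ⟨i, rfl⟩ := ht
    exact S.isOrthoSet_rAct i (ih hs)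

/-- The roots of `B` that are not fixed up to sign by the reflection `r i`. -/
def moved (S : SLRS V) (i : Fin S.n) (B : Set V) : Set V :=
  {β ∈ B | ⟪β, S.α i⟫_ℝ = 1 ∨ ⟪β, S.α i⟫_ℝ = -1}

lemma refl_not_mem (S : SLRS V) (i : Fin S.n) {B : Set V} (hB : S.IsOrthoSet B) {β : V}
    (hβ : β ∈ S.moved i B) : S.refl i β ∉ B := by
  intro hmem
  have hn := S.norm_two β (S.pos_subset (hB.1 hβ.1))
  have h1 : ⟪β, S.refl i β⟫_ℝ = 1 := by
    simp only [refl, reflRoot, inner_sub_right, inner_smul_right, hn]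
    rcases hβ.2 with h | h <;> rw [h] <;> norm_num
  by_cases he : β = S.refl i β
  · rw [← he, hn] at h1
    norm_num at h1
  · rw [hB.2 _ hβ.1 _ hmem he] at h1
    norm_num at h1

lemma diff_rAct (S : SLRS V) (i : Fin S.n) {B : Set V} (hB : S.IsOrthoSet B) :
    B \ S.rAct i B = S.moved i B := by
  ext x
  constructor
  · rintro ⟨hx, hn⟩
    refine ⟨hx, ?_⟩
    by_contra h
    exact hn ⟨hB.1 hx, x, hx, S.refl_of_not_moved i (hB.1 hx) h⟩
  · intro hx
    refine ⟨hx.1, ?_⟩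
    rintro ⟨-, β, hβ, h | h⟩
    · refine S.refl_not_mem i hB hx ?_
      rwa [← h, refl_refl]
    · -- here `β = -(r x)`, contradicting the positivity of `r x`
      have e : S.refl i x = -β := by
        rw [← S.refl_refl i β, h, refl_neg, neg_neg]
      exact S.not_pos_and_neg β (hB.1 hβ) (e ▸ S.refl_pos_s6 i (hB.1 hx.1) hx.2)

lemma rAct_diff (S : SLRS V) (i : Fin S.n) {B : Set V} (hB : S.IsOrthoSet B) :
    S.rAct i B \ B = S.refl i '' S.moved i B := by
  ext x
  constructor
  · rintro ⟨⟨hx, β, hβ, h⟩, hn⟩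
    by_cases hm : ⟪β, S.α i⟫_ℝ = 1 ∨ ⟪β, S.α i⟫_ℝ = -1
    · refine ⟨β, ⟨hβ, hm⟩, h.resolve_right fun h' => ?_⟩
      exact S.not_pos_and_neg x hx (h' ▸ S.refl_pos_s6 i (hB.1 hβ) hm)
    · -- then `x = ± β` with both positive, so `x = β ∈ B`
      exfalso
      rcases h with h | h <;> rcases S.refl_of_not_moved i (hB.1 hβ) hm with h' | h'
      · exact hn (h.symm.trans h' ▸ hβ)
      · exact S.not_pos_and_neg β (hB.1 hβ) (h'.symm.trans h ▸ hx)
      · exact S.not_pos_and_neg x hx (h.symm.trans h' ▸ hB.1 hβ)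
      · exact hn (neg_injective (h.symm.trans h') ▸ hβ)
  · rintro ⟨β, hβ, rfl⟩
    exact ⟨⟨S.refl_pos_s6 i (hB.1 hβ.1) hβ.2, β, hβ.1, Or.inl rfl⟩, S.refl_not_mem i hB hβ⟩

/-! ### Comparison of heights -/

lemma lt_of_witness (S : SLRS V) {X Y : Set V} (hX : X ⊆ S.Pos) (hY : Y ⊆ S.Pos) {x : V}
    (hx : x ∈ X \ Y) (hne : (Y \ X).Nonempty) (h : ∀ y ∈ Y \ X, S.ht x < S.ht y) :
    S.lt X Y := by
  have fin : ∀ {Z W : Set V}, Z ⊆ S.Pos → (S.ht '' (Z \ W)).Finite := fun hZ =>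
    (S.finite.subset ((Set.sdiff_subset.trans hZ).trans S.pos_subset)).image _
  refine ⟨fun e => hx.2 (e ▸ hx.1), ?_⟩
  refine (csInf_le (fin hX).bddBelow ⟨x, hx, rfl⟩).trans_lt ?_
  rw [(fin hY).lt_csInf_iff (hne.image _)]
  rintro _ ⟨y, hy, rfl⟩
  exact h y hy

/-- If `γ - α i` had the height of `β`, then `β + α i - γ` would be a root of height zero. -/
lemma ht_refl_ne (S : SLRS V) (i : Fin S.n) {B : Set V} (hB : S.IsOrthoSet B) {β γ : V}
    (hβ : β ∈ B) (hγ : γ ∈ B) (h1 : ⟪β, S.α i⟫_ℝ = -1) (h2 : ⟪γ, S.α i⟫_ℝ = 1) :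
    S.ht (S.refl i γ) ≠ S.ht β := by
  intro he
  have hne : β ≠ γ := by
    rintro rfl
    rw [h1] at h2
    norm_num at h2
  have hroot := S.reflect_mem β (S.pos_subset (hB.1 hβ)) _ (S.pos_subset (S.alpha_pos i))
  have hin : ⟪β - ⟪β, S.α i⟫_ℝ • S.α i, γ⟫_ℝ = 1 := by
    rw [inner_sub_left, inner_smul_left, hB.2 β hβ γ hγ hne, h1, real_inner_comm, h2]
    simp
  have hroot2 := S.reflect_mem _ hroot γ (S.pos_subset (hB.1 hγ))
  apply S.ht_root_ne_zero hroot2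
  rw [S.ht_refl, h2] at he
  rw [hin, h1]
  simp only [map_sub, map_smul, S.ht_alpha, smul_eq_mul]
  linarith

end SLRS

/-- Proposition 3.1(i): for `𝓑` an admissible orbit, `B ∈ 𝓑`
and a node `i`, the sets `B` and `r i · B` are comparable; moreover if
`⟪α i, β⟫ = ± 1` for some `β ∈ B` then `r i · B ≠ B`. -/
theorem comparable_rAct (S : SLRS V) (𝓑 : Set (Set V)) (hadm : S.Admissible 𝓑)
    (B : Set V) (hB : B ∈ 𝓑) (i : Fin S.n) :
    (S.rAct i B = B ∨ S.lt B (S.rAct i B) ∨ S.lt (S.rAct i B) B) ∧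
    ((∃ β ∈ B, ⟪S.α i, β⟫_ℝ = 1 ∨ ⟪S.α i, β⟫_ℝ = -1) → S.rAct i B ≠ B) := by
  have hO := S.isOrthoSet_of_mem hadm.1 hB
  have hC := S.isOrthoSet_rAct i hO
  have hd1 := S.diff_rAct i hO
  have hd2 := S.rAct_diff i hO
  constructor
  · rcases (S.moved i B).eq_empty_or_nonempty with he | hne
    · left
      rw [he] at hd1 hd2
      rw [Set.image_empty] at hd2
      exact (Set.sdiff_eq_empty.1 hd2).antisymm (Set.sdiff_eq_empty.1 hd1)
    · right
      have hfin : (S.moved i B).Finite :=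
        S.finite.subset fun x hx => S.pos_subset (hO.1 hx.1)
      obtain ⟨β₀, hβ₀, hmin⟩ := Set.exists_min_image _ S.ht hfin hne
      by_cases hex : ∃ β ∈ S.moved i B, S.ht β = S.ht β₀ ∧ ⟪β, S.α i⟫_ℝ = 1
      · obtain ⟨β, hβ, hβh, hβ1⟩ := hex
        right
        refine S.lt_of_witness hC.1 hO.1 (x := S.refl i β) (hd2 ▸ ⟨β, hβ, rfl⟩)
          (hd1 ▸ hne) fun y hy => ?_
        rw [hd1] at hy
        have := hmin y hy
        rw [S.ht_refl, hβ1]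
        linarith
      · left
        refine S.lt_of_witness hO.1 hC.1 (x := β₀) (hd1 ▸ hβ₀)
          (hd2 ▸ hne.image _) fun y hy => ?_
        rw [hd2] at hy
        obtain ⟨γ, hγ, rfl⟩ := hy
        have hle := hmin γ hγ
        rcases hγ.2 with h1 | h1
        · have hβ₀' : ⟪β₀, S.α i⟫_ℝ = -1 :=
            hβ₀.2.resolve_left fun h => hex ⟨β₀, hβ₀, rfl, h⟩
          have hneq := S.ht_refl_ne i hO hβ₀.1 hγ.1 hβ₀' h1
          have hneq' : S.ht γ ≠ S.ht β₀ := fun h => hex ⟨γ, hγ, h, h1⟩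
          obtain ⟨a, -, ha⟩ := S.ht_pos_s6 (hO.1 hβ₀.1)
          obtain ⟨b, -, hb⟩ := S.ht_pos_s6 (hO.1 hγ.1)
          rw [S.ht_refl, h1] at hneq ⊢
          refine lt_of_le_of_ne ?_ hneq.symm
          -- heights are integers, so `ht β₀ < ht γ` gives `ht β₀ ≤ ht γ - 1`
          have hlt := lt_of_le_of_ne hle hneq'.symm
          rw [ha, hb] at hlt ⊢
          have hab : a + 1 ≤ b := by exact_mod_cast hlt
          have hab' : (a : ℝ) + 1 ≤ b := by exact_mod_cast hab
          linarith
        · rw [S.ht_refl, h1]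
          linarith
  · rintro ⟨β, hβ, h⟩ he
    rw [real_inner_comm] at h
    have hm : β ∈ S.moved i B := ⟨hβ, h⟩
    rw [← hd1, he] at hm
    exact hm.2 hm.1
end
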